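/- Let k and t be positive integers with k ≥ 4. There exists n₀ = n₀(k,t) such that for all integers n ≥ n₀: if F ⊆ binom([n],k) contains no copy of the k-uniform linear path P^{(k)}_{2t+2} and |F| = C(n−1,k−1) + C(n−2,k−1) + … + C(n−t,k−1) + C(n−t−2,k−2), then there exist a set S ⊆ [n] with |S| = t and two distinct elements u,v ∈ [n]∖S such that F consists of exactly all k-subsets of [n] that intersect S together with all k-subsets of [n]∖S that contain both u and v. -/

import Mathlib

open Finset

/-- The family `F` of k-sets contains a k-uniform linear path of length ℓ. -/
def ContainsLinearPath (k ℓ : ℕ) {n : ℕ} (F : Finset (Finset (Fin n))) : Prop :=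
  ∃ P : Fin ℓ → Finset (Fin n), Function.Injective P ∧
    (∀ i, P i ∈ F) ∧ (∀ i, (P i).card = k) ∧
    (∀ i j : Fin ℓ, (i : ℕ) + 1 = (j : ℕ) → (P i ∩ P j).card = 1) ∧
    (∀ i j : Fin ℓ, (i : ℕ) + 1 < (j : ℕ) → P i ∩ P j = ∅)

/-!
Call a vertex set `U` a kernel of `F` if members of `F` through `U` can be chosen to avoid, outside
`U`, any bounded set of vertices. Linear paths are built greedily through kernels. By Füredi's
intersection semilattice method, a positive proportion of any subfamily is homogeneous: the kernels
inside its members have a fixed pattern of colors. Since `F` has no path of length `2t + 2`, all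
but `O(n ^ (k - 2))` members of `F` are therefore star-like: they have a vertex `x` such that every
subset containing `x` is a kernel.

The graph whose edges are the kernels of size two is sparse, and any `t + 1` of its vertices have
boundedly many common neighbors, because a path can be woven through them. Since `F` has about
`t * n ^ (k - 1) / (k - 1)!` members, counting degrees yields a set `S` of `t` vertices adjacent to
almost all vertices. Two members of `F` that avoid `S` and meet in a single vertex can be prolonged
through `S` to a path of length `2t + 2`, provided one of them has a further vertex adjacent to all
of `S`. Hence the members avoiding `S` with at least two such vertices have no single
intersections, so by Frankl's theorem there are at most `(n - t - 2).choose (k - 2)` of them, with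
equality only for all `k`-sets through two fixed vertices.

An exceptional vertex, not adjacent to all of `S`, lies in about `n ^ (k - 2) / (k - 2)!` sets that
meet `S` but are missing from `F`. These losses outweigh the remaining members of `F`, which
consist almost entirely of exceptional vertices; so there are no exceptional vertices.
-/

/-- `U` is a `w`-kernel of `F`: every set `W` of at most `w` vertices is missed, outside `U`, by
some member of `F` containing `U`. This is a robust form of being the kernel of a large sunflower
in `F`, suited to choosing members of `F` greedily. -/
def IsKernel {α : Type*} [DecidableEq α] (w : ℕ) (F : Finset (Finset α)) (U : Finset α) : Prop :=
  ∀ W : Finset α, #W ≤ w → ∃ E ∈ F, U ⊆ E ∧ Disjoint (E \ U) W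

namespace IsKernel

variable {α : Type*} [DecidableEq α] {w : ℕ} {F G : Finset (Finset α)} {U : Finset α}

lemma mono (hU : IsKernel w F U) (hFG : F ⊆ G) : IsKernel w G U := fun W hW =>
  let ⟨E, hE, hUE⟩ := hU W hW
  ⟨E, hFG hE, hUE⟩

lemma of_mem (hU : U ∈ F) : IsKernel w F U := fun _ _ => ⟨U, hU, Subset.rfl, by simp⟩

end IsKernel

section Rainbow

variable {α ι : Type*}

/-- The coloring `χ` uses each color exactly once on `E`. -/
def IsRainbow (χ : α → ι) (E : Finset α) : Prop := Set.BijOn χ (E : Set α) Set.univ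

variable {χ : α → ι} {E E' U : Finset α}

lemma IsRainbow.eq_of_color_eq (hE : IsRainbow χ E) {x y : α} (hx : x ∈ E) (hy : y ∈ E)
    (hxy : χ x = χ y) : x = y :=
  hE.injOn hx hy hxy

lemma IsRainbow.exists_color_eq (hE : IsRainbow χ E) (c : ι) : ∃ x ∈ E, χ x = c :=
  hE.surjOn (Set.mem_univ c)

lemma IsRainbow.eq_of_subset (hE : IsRainbow χ E) (hE' : IsRainbow χ E') (h : E ⊆ E') : E' = E := by
  refine Subset.antisymm (fun x hx => ?_) h
  obtain ⟨y, hy, hyx⟩ := hE.exists_color_eq (χ x)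
  rwa [← hE'.eq_of_color_eq (h hy) hx hyx]

lemma isRainbow_of_injOn [Fintype ι] (hE : #E = Fintype.card ι)
    (hχ : Set.InjOn χ (E : Set α)) : IsRainbow χ E := by
  classical
  have himage : E.image χ = univ := eq_univ_of_card _ (by rw [card_image_of_injOn hχ, hE])
  refine ⟨Set.mapsTo_univ _ _, hχ, fun c _ => ?_⟩
  have hc : c ∈ E.image χ := himage ▸ mem_univ c
  simpa using hc

open Classical in
lemma card_colorings_le_mul_card_isRainbow [DecidableEq α] [Fintype α] [Fintype ι]
    (hE : #E = Fintype.card ι) :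
    Fintype.card (α → ι) ≤
      Fintype.card ι ^ Fintype.card ι * #{χ : α → ι | IsRainbow χ E} := by
  have e : E ≃ ι := Fintype.equivOfCardEq (by simpa using hE)
  -- A coloring is recovered from its values on `E` and its rainbow modification on `E`.
  let split : (α → ι) → (E → ι) × (α → ι) := fun χ =>
    (fun y => χ y, fun x => if h : x ∈ E then e ⟨x, h⟩ else χ x)
  have hmaps : ∀ χ, IsRainbow (split χ).2 E := fun χ => by
    refine isRainbow_of_injOn hE fun x (hx : x ∈ E) y (hy : y ∈ E) hxy => ?_
    simpa [split, hx, hy] using hxy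
  have hinj : Function.Injective split := fun χ χ' h => by
    simp only [split, Prod.mk.injEq] at h
    funext x
    by_cases hx : x ∈ E
    · exact congrFun h.1 ⟨x, hx⟩
    · simpa [hx] using congrFun h.2 x
  calc Fintype.card (α → ι) = #(univ : Finset (α → ι)) := rfl
    _ ≤ #((univ : Finset (E → ι)) ×ˢ ({χ | IsRainbow χ E} : Finset (α → ι))) :=
      card_le_card_of_injOn split (fun χ _ => by simpa using hmaps χ) hinj.injOn
    _ = _ := by simp [hE]

open Classical in
lemma exists_coloring_card_le_mul_card_isRainbow [Finite α] [Fintype ι] [Nonempty ι]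
    (Q : Finset (Finset α)) (hQ : (Q : Set (Finset α)).Sized (Fintype.card ι)) :
    ∃ χ : α → ι, #Q ≤ Fintype.card ι ^ Fintype.card ι * #{E ∈ Q | IsRainbow χ E} := by
  have := Fintype.ofFinite α
  suffices h : ∑ _χ : α → ι, #Q ≤
      ∑ χ : α → ι, Fintype.card ι ^ Fintype.card ι * #{E ∈ Q | IsRainbow χ E} by
    obtain ⟨χ, -, hχ⟩ := exists_le_of_sum_le univ_nonempty h
    exact ⟨χ, hχ⟩
  calc ∑ _χ : α → ι, #Q = ∑ _E ∈ Q, Fintype.card (α → ι) := by simp [mul_comm]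
    _ ≤ ∑ E ∈ Q, Fintype.card ι ^ Fintype.card ι * #{χ : α → ι | IsRainbow χ E} :=
      sum_le_sum fun E hE => card_colorings_le_mul_card_isRainbow (hQ hE)
    _ = ∑ χ : α → ι, Fintype.card ι ^ Fintype.card ι * #{E ∈ Q | IsRainbow χ E} := by
      simp only [← mul_sum]
      exact congrArg _
        (sum_card_bipartiteAbove_eq_sum_card_bipartiteBelow fun (E : Finset α) χ => IsRainbow χ E)

variable [DecidableEq ι]

/-- The vertices of `E` whose color is not in `T`. -/
def avoidColors (χ : α → ι) (E : Finset α) (T : Finset ι) : Finset α := {x ∈ E | χ x ∉ T}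

variable {T : Finset ι}

lemma mem_avoidColors {x : α} : x ∈ avoidColors χ E T ↔ x ∈ E ∧ χ x ∉ T := mem_filter

lemma avoidColors_subset : avoidColors χ E T ⊆ E := filter_subset _ _

lemma avoidColors_empty : avoidColors χ E ∅ = E := by simp [avoidColors]

lemma avoidColors_image_sdiff [DecidableEq α] (hE : IsRainbow χ E) (hU : U ⊆ E) :
    avoidColors χ E ((E \ U).image χ) = U := by
  ext x
  simp only [mem_avoidColors, mem_image, mem_sdiff, not_exists, not_and]
  refine ⟨fun ⟨hx, hcol⟩ => by_contra fun hxU => hcol x ⟨hx, hxU⟩ rfl, fun hx => ⟨hU hx, ?_⟩⟩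
  rintro y ⟨hyE, hyU⟩ hyx
  exact hyU (hE.eq_of_color_eq hyE (hU hx) hyx ▸ hx)

lemma avoidColors_eq_of_subset (hE : IsRainbow χ E) (hE' : IsRainbow χ E')
    (h : avoidColors χ E T ⊆ E') : avoidColors χ E' T = avoidColors χ E T := by
  refine Subset.antisymm (fun x hx => ?_) fun x hx =>
    mem_avoidColors.2 ⟨h hx, (mem_avoidColors.1 hx).2⟩
  obtain ⟨hxE', hxT⟩ := mem_avoidColors.1 hx
  obtain ⟨y, hyE, hyx⟩ := hE.exists_color_eq (χ x)
  have hy : y ∈ avoidColors χ E T := mem_avoidColors.2 ⟨hyE, hyx ▸ hxT⟩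
  rwa [← hE'.eq_of_color_eq (h hy) hxE' hyx]

lemma avoidColors_erase_subset {X Y : Finset α} {z : α} (hE : IsRainbow χ E) (hX : IsRainbow χ X)
    (hEX : avoidColors χ E T ⊆ X) (hzX : z ∈ X) (hEY : avoidColors χ E T ⊆ Y) (hzY : z ∈ Y) :
    avoidColors χ X (T.erase (χ z)) ⊆ Y := by
  intro x hx
  obtain ⟨hxX, hxT⟩ := mem_avoidColors.1 hx
  by_cases hxz : χ x = χ z
  · rwa [hX.eq_of_color_eq hxX hzX hxz]
  · apply hEY
    rw [← avoidColors_eq_of_subset hE hX hEX]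
    exact mem_avoidColors.2 ⟨hxX, fun h => hxT (mem_erase.2 ⟨hxz, h⟩)⟩

variable [Fintype ι]

lemma avoidColors_univ_erase (hE : IsRainbow χ E) {v : α} (hv : v ∈ E) :
    avoidColors χ E (univ.erase (χ v)) = {v} := by
  ext x
  simp only [mem_avoidColors, mem_erase, mem_univ, and_true, not_not, mem_singleton]
  exact ⟨fun ⟨hx, hxv⟩ => hE.eq_of_color_eq hx hv hxv, by rintro rfl; exact ⟨hv, rfl⟩⟩

lemma card_avoidColors (hE : IsRainbow χ E) (T : Finset ι) : #(avoidColors χ E T) = #Tᶜ := by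
  have himage : (avoidColors χ E T).image χ = Tᶜ := by
    ext c
    simp only [mem_image, mem_compl, mem_avoidColors]
    refine ⟨by rintro ⟨x, ⟨_, hx⟩, rfl⟩; exact hx, fun hc => ?_⟩
    obtain ⟨x, hx, rfl⟩ := hE.exists_color_eq c
    exact ⟨x, ⟨hx, hc⟩, rfl⟩
  rw [← himage, card_image_of_injOn (hE.injOn.mono (coe_subset.2 avoidColors_subset))]

end Rainbow

section Homogeneous

variable {α ι : Type*} [DecidableEq α] [DecidableEq ι] {w : ℕ} {χ : α → ι}

/-- No member of `R` has its part with colors outside `T` as a kernel of `R`. -/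
def IsKernelFree (w : ℕ) (χ : α → ι) (T : Finset ι) (R : Finset (Finset α)) : Prop :=
  ∀ E ∈ R, ¬ IsKernel w R (avoidColors χ E T)

lemma IsKernelFree.insert {T : Finset ι} {R G : Finset (Finset α)} {E₀ : Finset α}
    (hR : IsKernelFree w χ T R) (hG : ∀ E ∈ G, IsRainbow χ E) (hRG : insert E₀ R ⊆ G)
    (hE₀ : ¬ IsKernel w G (avoidColors χ E₀ T)) : IsKernelFree w χ T (insert E₀ R) := by
  intro E hE hker
  by_cases hsub : avoidColors χ E T ⊆ E₀
  · have heq := avoidColors_eq_of_subset (hG E (hRG hE)) (hG E₀ (hRG (mem_insert_self _ _))) hsub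
    exact hE₀ (heq ▸ hker.mono hRG)
  · have hne : E ≠ E₀ := by rintro rfl; exact hsub avoidColors_subset
    refine hR E (mem_of_mem_insert_of_ne hE hne) fun W hW => ?_
    obtain ⟨X, hX, hEX, hXW⟩ := hker W hW
    exact ⟨X, mem_of_mem_insert_of_ne hX (by rintro rfl; exact hsub hEX), hEX, hXW⟩

lemma exists_subset_forall_isKernel_cover (A : Finset (Finset ι)) (G : Finset (Finset α))
    (hG : ∀ E ∈ G, IsRainbow χ E) :
    ∃ H ⊆ G, ∃ R : Finset ι → Finset (Finset α),
      (∀ E ∈ H, ∀ T ∈ A, IsKernel w H (avoidColors χ E T)) ∧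
      (∀ T, R T ⊆ G ∧ IsKernelFree w χ T (R T)) ∧ G ⊆ H ∪ A.biUnion R := by
  induction G using Finset.strongInduction with
  | H G ih =>
    by_cases hgood : ∀ E ∈ G, ∀ T ∈ A, IsKernel w G (avoidColors χ E T)
    · exact ⟨G, Subset.rfl, fun _ => ∅, hgood, fun _ => ⟨empty_subset _, by simp [IsKernelFree]⟩,
        subset_union_left⟩
    push Not at hgood
    obtain ⟨E₀, hE₀, T₀, hT₀, hnker⟩ := hgood
    obtain ⟨H, hHG, R, hH, hR, hcover⟩ :=
      ih (G.erase E₀) (erase_ssubset hE₀) fun E hE => hG E (mem_of_mem_erase hE)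
    have hRG : ∀ T, R T ⊆ G := fun T => (hR T).1.trans (erase_subset _ _)
    refine ⟨H, hHG.trans (erase_subset _ _), Function.update R T₀ (insert E₀ (R T₀)), hH, ?_, ?_⟩
    · intro T
      rcases eq_or_ne T T₀ with rfl | hT
      · have hins : insert E₀ (R T) ⊆ G := insert_subset hE₀ (hRG T)
        simpa using ⟨hins, (hR T).2.insert hG hins hnker⟩
      · simpa [hT] using ⟨hRG T, (hR T).2⟩
    · intro E hE
      rcases eq_or_ne E E₀ with rfl | hne
      · exact mem_union_right _ (mem_biUnion.2 ⟨T₀, hT₀, by simp⟩)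
      rcases mem_union.1 (hcover (mem_erase.2 ⟨hne, hE⟩)) with hEH | hER
      · exact mem_union_left _ hEH
      · obtain ⟨T, hT, hET⟩ := mem_biUnion.1 hER
        refine mem_union_right _ (mem_biUnion.2 ⟨T, hT, ?_⟩)
        rcases eq_or_ne T T₀ with rfl | hTT <;> simp [*]

/-- `H` is homogeneous with respect to the coloring `χ`: all its members are rainbow and have
the same kernels of `H` as subsets. The pattern `A` records these kernels by the set of
*removed* colors, which makes it closed under unions. -/
structure IsHomogeneous (w : ℕ) (H : Finset (Finset α)) (χ : α → ι) (A : Finset (Finset ι)) :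
    Prop where
  rainbow : ∀ E ∈ H, IsRainbow χ E
  mem_iff : ∀ E ∈ H, ∀ T, T ∈ A ↔ IsKernel w H (avoidColors χ E T)

lemma card_le_mul_card_or_exists_of_subset_union_biUnion {β γ : Type*} [DecidableEq β] {c : ℕ}
    {A : Finset γ} {G H : Finset β} {R : γ → Finset β} (hcover : G ⊆ H ∪ A.biUnion R)
    (hA : #A < c) : #G ≤ c * #H ∨ ∃ T ∈ A, #G ≤ c * #(R T) := by
  by_contra! hsmall
  obtain ⟨hH, hR⟩ := hsmall
  have hsum : c * #G < c * #G := calc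
    c * #G ≤ c * (#H + ∑ T ∈ A, #(R T)) := by
      gcongr
      exact (card_le_card hcover).trans
        ((card_union_le _ _).trans (by gcongr; exact card_biUnion_le))
    _ = c * #H + ∑ T ∈ A, c * #(R T) := by rw [mul_add, mul_sum]
    _ ≤ c * #H + #A * #G := by
      gcongr
      simpa using sum_le_card_nsmul A _ _ fun T hT => (hR T hT).le
    _ < #G + #A * #G := by gcongr
    _ = (#A + 1) * #G := by ring
    _ ≤ c * #G := by gcongr; exact hA
  exact hsum.false

variable [Fintype ι]

lemma exists_isHomogeneous_of_forall_isRainbow (A : Finset (Finset ι)) (G : Finset (Finset α))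
    (hG : ∀ E ∈ G, IsRainbow χ E) (hA : ∀ T ∉ A, IsKernelFree w χ T G) :
    ∃ H ⊆ G, ∃ A', IsHomogeneous w H χ A' ∧ #G ≤ (2 ^ Fintype.card ι + 1) ^ (#A + 1) * #H := by
  induction A using Finset.strongInduction generalizing G with
  | H A ih =>
    obtain ⟨H, hHG, R, hH, hR, hcover⟩ := exists_subset_forall_isKernel_cover (w := w) A G hG
    have hcA : #A < 2 ^ Fintype.card ι + 1 := by
      simpa [Nat.lt_succ_iff] using card_le_univ A
    rcases card_le_mul_card_or_exists_of_subset_union_biUnion hcover hcA with hGH | ⟨T, hT, hGR⟩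
    · refine ⟨H, hHG, A, ⟨fun E hE => hG E (hHG hE), fun E hE T => ⟨hH E hE T, fun hker => ?_⟩⟩,
        hGH.trans (Nat.mul_le_mul_right _ (Nat.le_self_pow (by simp) _))⟩
      by_contra hT
      exact hA T hT E (hHG hE) (hker.mono hHG)
    · obtain ⟨H', hH'R, A', hhom, hcard⟩ := ih (A.erase T) (erase_ssubset hT) (R T)
        (fun E hE => hG E ((hR T).1 hE)) fun T' hT' E hE hker => by
          rcases eq_or_ne T' T with rfl | hne
          · exact (hR T').2 E hE hker
          · exact hA T' (fun h => hT' (mem_erase.2 ⟨hne, h⟩)) E ((hR T).1 hE) (hker.mono (hR T).1)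
      refine ⟨H', hH'R.trans (hR T).1, A', hhom, hGR.trans ?_⟩
      rw [card_erase_add_one hT] at hcard
      rw [pow_succ', mul_assoc]
      exact Nat.mul_le_mul_left _ hcard

/-- The factor lost when passing from a `k`-uniform family to a homogeneous subfamily. -/
def homogeneityConst (k : ℕ) : ℕ := k ^ k * (2 ^ k + 1) ^ (2 ^ k + 1)

lemma exists_isHomogeneous [Finite α] [Nonempty ι] (w : ℕ) (Q : Finset (Finset α))
    (hQ : (Q : Set (Finset α)).Sized (Fintype.card ι)) :
    ∃ H ⊆ Q, ∃ (χ : α → ι) (A : Finset (Finset ι)), IsHomogeneous w H χ A ∧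
      #Q ≤ homogeneityConst (Fintype.card ι) * #H := by
  classical
  obtain ⟨χ, hχ⟩ := exists_coloring_card_le_mul_card_isRainbow Q hQ
  obtain ⟨H, hHG, A, hhom, hcard⟩ := exists_isHomogeneous_of_forall_isRainbow (w := w) univ
    {E ∈ Q | IsRainbow χ E} (fun E hE => (mem_filter.1 hE).2) (by simp)
  refine ⟨H, hHG.trans (filter_subset _ _), χ, A, hhom, hχ.trans ?_⟩
  rw [card_univ, Fintype.card_finset] at hcard
  rw [homogeneityConst, mul_assoc]
  exact Nat.mul_le_mul_left _ hcard

end Homogeneous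

namespace IsHomogeneous

variable {α ι : Type*} [DecidableEq α] [DecidableEq ι] {w : ℕ} {H : Finset (Finset α)}
  {χ : α → ι} {A : Finset (Finset ι)}

lemma empty_mem (hH : IsHomogeneous w H χ A) (hne : H.Nonempty) : ∅ ∈ A := by
  obtain ⟨E, hE⟩ := hne
  rw [hH.mem_iff E hE, avoidColors_empty]
  exact .of_mem hE

lemma supClosed (hH : IsHomogeneous w H χ A) (hne : H.Nonempty) :
    SupClosed (A : Set (Finset ι)) := by
  intro T₁ hT₁ T₂ hT₂
  obtain ⟨E, hE⟩ := hne
  rw [sup_eq_union, mem_coe, hH.mem_iff E hE]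
  intro W hW
  obtain ⟨E₁, hE₁, hsub₁, hdisj₁⟩ := (hH.mem_iff E hE T₁).1 hT₁ W hW
  obtain ⟨E₂, hE₂, hsub₂, hdisj₂⟩ := (hH.mem_iff E₁ hE₁ T₂).1 hT₂ W hW
  simp only [subset_iff, disjoint_left, mem_sdiff, mem_avoidColors, mem_union] at *
  exact ⟨E₂, hE₂, by grind, by grind⟩

lemma exists_card_le_forall_exists_mem_color_mem (hH : IsHomogeneous w H χ A) {T : Finset ι}
    (hT : T ∉ A) {E : Finset α} (hE : E ∈ H) : ∃ W : Finset α, #W ≤ w ∧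
      ∀ X ∈ H, avoidColors χ E T ⊆ X → ∃ z ∈ W, z ∈ X ∧ χ z ∈ T := by
  have hnker := mt (hH.mem_iff E hE T).2 hT
  rw [IsKernel] at hnker
  push Not at hnker
  obtain ⟨W, hW, hmeet⟩ := hnker
  refine ⟨W, hW, fun X hX hEX => ?_⟩
  obtain ⟨z, hz, hzW⟩ := not_disjoint_iff.1 (hmeet X hX hEX)
  obtain ⟨hzX, hzE⟩ := mem_sdiff.1 hz
  refine ⟨z, hzW, hzX, by_contra fun hzT => ?_⟩
  rw [← avoidColors_eq_of_subset (hH.rainbow E hE) (hH.rainbow X hX) hEX] at hzE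
  exact hzE (mem_avoidColors.2 ⟨hzX, hzT⟩)

lemma card_filter_avoidColors_subset_le (hH : IsHomogeneous w H χ A) (T : Finset ι)
    (hT : ∀ T' ⊆ T, T'.Nonempty → T' ∉ A) {E : Finset α} (hE : E ∈ H) :
    #{X ∈ H | avoidColors χ E T ⊆ X} ≤ w ^ #T := by
  induction T using Finset.strongInduction generalizing E with
  | H T ih =>
    rcases T.eq_empty_or_nonempty with rfl | hTne
    · have hsub : {X ∈ H | avoidColors χ E ∅ ⊆ X} ⊆ {E} := fun X hX => by
        obtain ⟨hXH, hEX⟩ := mem_filter.1 hX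
        rw [avoidColors_empty] at hEX
        exact mem_singleton.2 ((hH.rainbow E hE).eq_of_subset (hH.rainbow X hXH) hEX)
      simpa using card_le_card hsub
    obtain ⟨W, hW, hmeet⟩ :=
      hH.exists_card_le_forall_exists_mem_color_mem (hT T Subset.rfl hTne) hE
    have hcover : {X ∈ H | avoidColors χ E T ⊆ X} ⊆ W.biUnion fun z =>
        {X ∈ H | avoidColors χ E T ⊆ X ∧ z ∈ X ∧ χ z ∈ T} := fun X hX => by
      obtain ⟨hXH, hEX⟩ := mem_filter.1 hX
      obtain ⟨z, hzW, hz⟩ := hmeet X hXH hEX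
      exact mem_biUnion.2 ⟨z, hzW, mem_filter.2 ⟨hXH, hEX, hz⟩⟩
    have hfiber : ∀ z ∈ W,
        #{X ∈ H | avoidColors χ E T ⊆ X ∧ z ∈ X ∧ χ z ∈ T} ≤ w ^ (#T - 1) := by
      intro z _
      rcases eq_empty_or_nonempty {X ∈ H | avoidColors χ E T ⊆ X ∧ z ∈ X ∧ χ z ∈ T}
        with hempty | ⟨X, hX⟩
      · rw [hempty, card_empty]
        exact Nat.zero_le _
      obtain ⟨hXH, hEX, hzX, hzT⟩ := mem_filter.1 hX
      rw [← card_erase_of_mem hzT]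
      refine (card_le_card fun Y hY => ?_).trans (ih (T.erase (χ z)) (erase_ssubset hzT)
        (fun T' hT' => hT T' (hT'.trans (erase_subset _ _))) hXH)
      obtain ⟨hYH, hEY, hzY, -⟩ := mem_filter.1 hY
      exact mem_filter.2 ⟨hYH, avoidColors_erase_subset (hH.rainbow E hE) (hH.rainbow X hXH)
        hEX hzX hEY hzY⟩
    calc #{X ∈ H | avoidColors χ E T ⊆ X} ≤ #W * w ^ (#T - 1) :=
          (card_le_card hcover).trans (card_biUnion_le_card_mul _ _ _ hfiber)
      _ ≤ w * w ^ (#T - 1) := Nat.mul_le_mul_right _ hW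
      _ = w ^ #T := by rw [mul_comm, pow_sub_one_mul hTne.card_ne_zero]

lemma card_le [Fintype ι] (hH : IsHomogeneous w H χ A) {V : Finset α} (hV : ∀ E ∈ H, E ⊆ V)
    {T : Finset ι} (hT : ∀ T' ⊆ T, T'.Nonempty → T' ∉ A) :
    #H ≤ w ^ #T * #V ^ (Fintype.card ι - #T) := by
  have hmaps : ∀ E ∈ H, avoidColors χ E T ∈ powersetCard (Fintype.card ι - #T) V := fun E hE =>
    mem_powersetCard.2 ⟨avoidColors_subset.trans (hV E hE),
      by rw [card_avoidColors (hH.rainbow E hE), card_compl]⟩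
  have hfiber : ∀ B ∈ powersetCard (Fintype.card ι - #T) V,
      #{E ∈ H | avoidColors χ E T = B} ≤ w ^ #T := by
    intro B _
    rcases eq_empty_or_nonempty {E ∈ H | avoidColors χ E T = B} with hempty | ⟨E, hE⟩
    · simp [hempty]
    obtain ⟨hEH, rfl⟩ := mem_filter.1 hE
    refine (card_le_card fun X hX => ?_).trans (hH.card_filter_avoidColors_subset_le T hT hEH)
    obtain ⟨hXH, hXE⟩ := mem_filter.1 hX
    exact mem_filter.2 ⟨hXH, hXE ▸ avoidColors_subset⟩
  refine (card_le_mul_card_image_of_maps_to hmaps _ hfiber).trans (Nat.mul_le_mul_left _ ?_)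
  rw [card_powersetCard]
  exact Nat.choose_le_pow _ _

end IsHomogeneous

section UnionClosed

variable {ι : Type*}

lemma exists_notMem_of_card_lt_card_univ [Fintype ι] {B : Finset ι} (hB : #B < Fintype.card ι) :
    ∃ s, s ∉ B := by
  obtain ⟨s, -, hs⟩ := exists_mem_notMem_of_card_lt_card (s := B) (t := univ) hB
  exact ⟨s, hs⟩

variable [DecidableEq ι] {A : Finset (Finset ι)}

lemma mem_of_forall_exists_mem_subset (h₀ : ∅ ∈ A) (hA : SupClosed (A : Set (Finset ι)))
    {B : Finset ι} (hB : ∀ s ∈ B, ∃ T ∈ A, s ∈ T ∧ T ⊆ B) : B ∈ A := by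
  have hsup : ({T ∈ A | T ⊆ B} : Finset (Finset ι)).sup id ∈ (A : Set (Finset ι)) :=
    hA.finsetSup_mem ⟨∅, by simp [h₀]⟩ fun T hT => (mem_filter.1 hT).1
  convert mem_coe.1 hsup
  refine Subset.antisymm (fun s hs => ?_) (Finset.sup_le fun T hT => (mem_filter.1 hT).2)
  obtain ⟨T, hT, hsT, hTB⟩ := hB s hs
  exact Finset.le_sup (f := id) (mem_filter.2 ⟨hT, hTB⟩) hsT

section Twins

variable {u v r : ι}

lemma singleton_mem_or_pair_mem_of_twins
    (htriples : ∀ B : Finset ι, #B = 3 → ∃ T ∈ A, T.Nonempty ∧ T ⊆ B)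
    (htwin : ∀ T ∈ A, u ∈ T ↔ v ∈ T) (hrv : r ≠ v) (hru : r ≠ u) (hr : {r} ∉ A) (huv : u ≠ v)
    {s : ι} (hsu : s ≠ u) (hsv : s ≠ v) (hsr : s ≠ r) : {s} ∈ A ∨ {r, s} ∈ A := by
  obtain ⟨T, hT, hTne, hTsub⟩ := htriples {u, r, s}
    (card_eq_three.2 ⟨u, r, s, hru.symm, hsu.symm, hsr.symm, rfl⟩)
  have huT : u ∉ T := fun huT => by grind
  have hTcases : T = {r} ∨ T = {s} ∨ T = {r, s} := by grind
  grind

lemma exists_mem_subset_of_twins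
    (htriples : ∀ B : Finset ι, #B = 3 → ∃ T ∈ A, T.Nonempty ∧ T ⊆ B)
    (htwin : ∀ T ∈ A, u ∈ T ↔ v ∈ T) (huv : u ≠ v) (hru : r ≠ u) (hrv : r ≠ v) (hr : {r} ∉ A) :
    ∃ T ∈ A, u ∈ T ∧ v ∈ T ∧ T ⊆ {u, v, r} := by
  obtain ⟨T, hT, hTne, hTsub⟩ := htriples {u, v, r}
    (card_eq_three.2 ⟨u, v, r, huv, hru.symm, hrv.symm, rfl⟩)
  have huT : u ∈ T := by
    by_contra huT
    have hTr : T = {r} := hTne.subset_singleton_iff.1 fun x hx => by grind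
    exact hr (hTr ▸ hT)
  exact ⟨T, hT, huT, (htwin T hT).1 huT, hTsub⟩

end Twins

variable [Fintype ι]

lemma exists_ne_forall_mem_imp_mem_of_univ_erase_notMem (h₀ : ∅ ∈ A)
    (hA : SupClosed (A : Set (Finset ι))) {p : ι} (hp : univ.erase p ∉ A) :
    ∃ q ≠ p, ∀ T ∈ A, q ∈ T → p ∈ T := by
  by_contra! hcon
  refine hp (mem_of_forall_exists_mem_subset h₀ hA fun s hs => ?_)
  obtain ⟨T, hT, hsT, hpT⟩ := hcon s (ne_of_mem_erase hs)
  exact ⟨T, hT, hsT, fun x hx => mem_erase.2 ⟨ne_of_mem_of_not_mem hx hpT, mem_univ x⟩⟩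

lemma forall_ne_singleton_mem_or_exists_univ_erase_mem (hι : 4 ≤ Fintype.card ι) (h₀ : ∅ ∈ A)
    (hA : SupClosed (A : Set (Finset ι)))
    (hpairs : ∀ B : Finset ι, #B = 2 → ∃ T ∈ A, T.Nonempty ∧ T ⊆ B) :
    (∃ x, ∀ i ≠ x, {i} ∈ A) ∨ ∃ p q, p ≠ q ∧ univ.erase p ∈ A ∧ univ.erase q ∈ A := by
  by_cases hall : ∀ p, univ.erase p ∈ A
  · obtain ⟨p, q, hpq⟩ := Fintype.exists_pair_of_one_lt_card (α := ι) (by omega)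
    exact Or.inr ⟨p, q, hpq, hall p, hall q⟩
  push Not at hall
  obtain ⟨p, hp⟩ := hall
  obtain ⟨q, hqp, hq⟩ := exists_ne_forall_mem_imp_mem_of_univ_erase_notMem h₀ hA hp
  have hsingle : ∀ r, r ≠ p → r ≠ q → {r} ∈ A := by
    intro r hrp hrq
    obtain ⟨T, hT, hTne, hTsub⟩ := hpairs {q, r} (card_pair hrq.symm)
    have hpT : p ∉ T := fun h => by grind
    have hTr : T = {r} := hTne.subset_singleton_iff.1 fun x hx => by grind
    rwa [← hTr]
  obtain ⟨T, hT, hTne, hTsub⟩ := hpairs {p, q} (card_pair hqp.symm)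
  by_cases hqT : q ∈ T
  · have herase : ∀ r, r ≠ p → r ≠ q → univ.erase r ∈ A := fun r hrp hrq =>
      mem_of_forall_exists_mem_subset h₀ hA fun s hs => by
        by_cases hsT : s ∈ T
        · exact ⟨T, hT, hsT, fun x hx => by grind⟩
        · exact ⟨{s}, hsingle s (by grind) (by grind), mem_singleton_self s,
            singleton_subset_iff.2 hs⟩
    obtain ⟨r, hr⟩ := exists_notMem_of_card_lt_card_univ (B := {p, q})
      (card_le_two.trans_lt (by omega))
    obtain ⟨r', hr'⟩ := exists_notMem_of_card_lt_card_univ (B := {p, q, r})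
      (card_le_three.trans_lt (by omega))
    simp only [mem_insert, mem_singleton, not_or] at hr hr'
    exact Or.inr ⟨r, r', Ne.symm hr'.2.2, herase r hr.1 hr.2, herase r' hr'.1 hr'.2.1⟩
  · have hTp : T = {p} := hTne.subset_singleton_iff.1 fun x hx => by grind
    refine Or.inl ⟨q, fun i hi => ?_⟩
    rcases eq_or_ne i p with rfl | hip
    · rwa [← hTp]
    · exact hsingle i hip hi

lemma exists_ne_forall_mem_iff_mem [Nonempty ι] (h₀ : ∅ ∈ A) (hA : SupClosed (A : Set (Finset ι)))
    (herase : ∀ p, univ.erase p ∉ A) : ∃ u v, u ≠ v ∧ ∀ T ∈ A, u ∈ T ↔ v ∈ T := by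
  obtain ⟨u, -, hu⟩ := exists_min_image univ (fun p => #{T ∈ A | p ∈ T}) univ_nonempty
  obtain ⟨v, hvu, hv⟩ := exists_ne_forall_mem_imp_mem_of_univ_erase_notMem h₀ hA (herase u)
  have hsub : {T ∈ A | v ∈ T} ⊆ {T ∈ A | u ∈ T} := fun T hT => by
    obtain ⟨hTA, hvT⟩ := mem_filter.1 hT
    exact mem_filter.2 ⟨hTA, hv T hTA hvT⟩
  have heq := eq_of_subset_of_card_le hsub (hu v (mem_univ v))
  refine ⟨u, v, hvu.symm, fun T hT => ⟨fun huT => ?_, hv T hT⟩⟩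
  have huT' : T ∈ {T ∈ A | u ∈ T} := mem_filter.2 ⟨hT, huT⟩
  rw [← heq] at huT'
  exact (mem_filter.1 huT').2

lemma pair_mem_and_compl_mem_of_twins {u v r : ι} (hι : 4 ≤ Fintype.card ι) (h₀ : ∅ ∈ A)
    (hA : SupClosed (A : Set (Finset ι))) (herase : ∀ p, univ.erase p ∉ A)
    (htriples : ∀ B : Finset ι, #B = 3 → ∃ T ∈ A, T.Nonempty ∧ T ⊆ B)
    (htwin : ∀ T ∈ A, u ∈ T ↔ v ∈ T) (huv : u ≠ v) (hru : r ≠ u) (hrv : r ≠ v) (hr : {r} ∉ A) :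
    {u, v} ∈ A ∧ {u, v}ᶜ ∈ A ∧ #({u, v}ᶜ : Finset ι) = 2 := by
  have hsingle_or_pair : ∀ s, s ≠ u → s ≠ v → s ≠ r → {s} ∈ A ∨ {r, s} ∈ A := fun s =>
    singleton_mem_or_pair_mem_of_twins htriples htwin hrv hru hr huv
  obtain ⟨T₀, hT₀, huT₀, hvT₀, hT₀sub⟩ :=
    exists_mem_subset_of_twins htriples htwin huv hru hrv hr
  have hmem_of_r_mem : ∀ s, s ≠ u → s ≠ v → s ≠ r → ∀ T ∈ A, r ∈ T → s ∈ T := by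
    intro s hsu hsv hsr T hT hrT
    by_contra hsT
    refine herase s (mem_of_forall_exists_mem_subset h₀ hA fun x hx => ?_)
    have hxs := ne_of_mem_erase hx
    by_cases hxT₀ : x ∈ T₀
    · exact ⟨T₀, hT₀, hxT₀, fun y hy => by grind⟩
    by_cases hxr : x = r
    · exact ⟨T, hT, hxr ▸ hrT, fun y hy => by grind⟩
    rcases hsingle_or_pair x (by grind) (by grind) hxr with hx' | hx' <;>
      exact ⟨_, hx', by simp, by grind⟩
  obtain ⟨s₀, hs₀⟩ := exists_notMem_of_card_lt_card_univ (B := {u, v, r})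
    (card_le_three.trans_lt (by omega))
  have hT₀eq : T₀ = {u, v} := by grind
  obtain ⟨s, hsu, hsv, hsr, hs⟩ : ∃ s, s ≠ u ∧ s ≠ v ∧ s ≠ r ∧ {s} ∉ A := by
    by_contra! hcon
    refine herase r (mem_of_forall_exists_mem_subset h₀ hA fun x hx => ?_)
    by_cases hxT₀ : x ∈ T₀
    · exact ⟨T₀, hT₀, hxT₀, fun y hy => by grind⟩
    · exact ⟨{x}, hcon x (by grind) (by grind) (by grind), by simp, by grind⟩
  have hrs : {r, s} ∈ A := (hsingle_or_pair s hsu hsv hsr).resolve_left hs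
  have hcompl : ({u, v} : Finset ι)ᶜ = {r, s} := by
    ext x
    have := hmem_of_r_mem x
    rw [mem_compl]
    grind
  rw [hcompl]
  exact ⟨hT₀eq ▸ hT₀, hrs, card_pair hsr.symm⟩

lemma exists_pair_forall_singleton_mem_or_exists_compl_mem (hι : 4 ≤ Fintype.card ι) (h₀ : ∅ ∈ A)
    (hA : SupClosed (A : Set (Finset ι))) (herase : ∀ p, univ.erase p ∉ A)
    (htriples : ∀ B : Finset ι, #B = 3 → ∃ T ∈ A, T.Nonempty ∧ T ⊆ B) :
    (∃ u v, u ≠ v ∧ ∀ i, i ≠ u → i ≠ v → {i} ∈ A) ∨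
      Fintype.card ι = 4 ∧ ∃ B : Finset ι, #B = 2 ∧ B ∈ A ∧ Bᶜ ∈ A := by
  have : Nonempty ι := Fintype.card_pos_iff.1 (by omega)
  obtain ⟨u, v, huv, htwin⟩ := exists_ne_forall_mem_iff_mem h₀ hA herase
  by_cases hall : ∀ i, i ≠ u → i ≠ v → {i} ∈ A
  · exact Or.inl ⟨u, v, huv, hall⟩
  push Not at hall
  obtain ⟨r, hru, hrv, hr⟩ := hall
  obtain ⟨huvA, hcompl, hcard⟩ :=
    pair_mem_and_compl_mem_of_twins hι h₀ hA herase htriples htwin huv hru hrv hr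
  refine Or.inr ⟨?_, {u, v}, card_pair huv, huvA, hcompl⟩
  rw [← card_add_card_compl ({u, v} : Finset ι), hcard, card_pair huv]

end UnionClosed

section LinearPath

variable {α : Type*} [DecidableEq α]

/-- `LinearPathTo F m v B`: there is a linear path of length `m` in `F` with vertex set `B` that
ends in the free vertex `v`, so that it is prolonged by any member of `F` meeting `B` in `v`
only. The path of length `0` is the vertex `v`. -/
inductive LinearPathTo (F : Finset (Finset α)) : ℕ → α → Finset α → Prop
  | nil (v : α) : LinearPathTo F 0 v {v}
  | snoc {m : ℕ} {v x : α} {B E : Finset α} : LinearPathTo F m v B → E ∈ F → E ∩ B = {v} →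
      x ∈ E → x ≠ v → LinearPathTo F (m + 1) x (B ∪ E)

namespace LinearPathTo

variable {F G : Finset (Finset α)} {m : ℕ} {v : α} {B : Finset α}

lemma end_mem (h : LinearPathTo F m v B) : v ∈ B := by
  cases h with
  | nil => exact mem_singleton_self v
  | snoc _ _ _ hxE _ => exact mem_union_right _ hxE

lemma single {E : Finset α} (hE : E ∈ F) (hv : v ∈ E) (hcard : 2 ≤ #E) :
    LinearPathTo F 1 v E := by
  obtain ⟨x, hxE, hxv⟩ := exists_mem_ne (Nat.lt_of_succ_le hcard) v
  have hpath := (nil (F := F) x).snoc hE (inter_singleton_of_mem hxE) hv hxv.symm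
  rwa [singleton_union, insert_eq_of_mem hxE] at hpath

lemma mono (h : LinearPathTo F m v B) (hFG : F ⊆ G) : LinearPathTo G m v B := by
  induction h with
  | nil v => exact nil v
  | snoc _ hE hEB hxE hxv ih => exact snoc ih (hFG hE) hEB hxE hxv

lemma card_le {k : ℕ} (hF : (F : Set (Finset α)).Sized k) (h : LinearPathTo F m v B) :
    #B ≤ k * m + 1 := by
  induction h with
  | nil v => simp
  | @snoc m _ _ B E _ hE _ _ _ ih =>
    have hunion := card_union_le B E
    rw [hF hE] at hunion
    rw [mul_add_one]
    omega

lemma exists_edges (h : LinearPathTo F m v B) : ∃ P : ℕ → Finset α,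
    (∀ i < m, P i ∈ F ∧ P i ⊆ B ∧ (v ∈ P i ↔ i + 1 = m)) ∧
    (∀ i, i + 1 < m → #(P i ∩ P (i + 1)) = 1) ∧
    ∀ i j, i + 1 < j → j < m → Disjoint (P i) (P j) := by
  induction h with
  | nil v => exact ⟨fun _ => ∅, by simp⟩
  | @snoc m v x B E _ hE hEB hxE hxv ih =>
    obtain ⟨P, hP, hadj, hdisj⟩ := ih
    have hxB : x ∉ B := fun hxB => hxv (mem_singleton.1 (hEB ▸ mem_inter.2 ⟨hxE, hxB⟩))
    have hvE : v ∈ E := (mem_inter.1 (hEB ▸ mem_singleton_self v : v ∈ E ∩ B)).1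
    have hmeet : ∀ i < m, ∀ y ∈ P i, y ∈ E → y = v := fun i hi y hyP hyE =>
      mem_singleton.1 (hEB ▸ mem_inter.2 ⟨hyE, (hP i hi).2.1 hyP⟩)
    refine ⟨fun i => if i = m then E else P i, fun i hi => ?_, fun i hi => ?_, fun i j hij hj => ?_⟩
    · rcases eq_or_ne i m with rfl | him
      · simp [hE, hxE]
      · obtain ⟨hPF, hPB, -⟩ := hP i (by omega)
        simpa [him, hPF, hPB.trans subset_union_left] using fun hxP => hxB (hPB hxP)
    · rcases eq_or_ne (i + 1) m with rfl | him
      · have hinter : P i ∩ E = {v} := by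
          ext y
          rw [mem_inter, mem_singleton]
          refine ⟨fun hy => hmeet i (by omega) y hy.1 hy.2, ?_⟩
          rintro rfl
          exact ⟨((hP i (by omega)).2.2).2 rfl, hvE⟩
        simp [hinter]
      · simpa [him, show i ≠ m by omega] using hadj i (by omega)
    · rcases eq_or_ne j m with rfl | hjm
      · simp only [show i ≠ j by omega, if_false, if_true, disjoint_left]
        intro y hyP hyE
        obtain rfl := hmeet i (by omega) y hyP hyE
        have := ((hP i (by omega)).2.2).1 hyP
        omega
      · simpa [hjm, show i ≠ m by omega] using hdisj i j hij (by omega)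

end LinearPathTo

lemma containsLinearPath_of_linearPathTo {n k m : ℕ} {F : Finset (Finset (Fin n))} {v : Fin n}
    {B : Finset (Fin n)} (hk : 2 ≤ k) (hF : (F : Set (Finset (Fin n))).Sized k)
    (h : LinearPathTo F m v B) : ContainsLinearPath k m F := by
  obtain ⟨P, hP, hadj, hdisj⟩ := h.exists_edges
  have hcard : ∀ i < m, #(P i) = k := fun i hi => hF (hP i hi).1
  have hne : ∀ i j, i < j → j < m → P i ≠ P j := by
    intro i j hij hj heq
    rcases (Nat.succ_le_of_lt hij).eq_or_lt with rfl | hlt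
    · have hone := hadj i hj
      rw [← heq, inter_self, hcard i (by omega)] at hone
      omega
    · have hempty := hdisj i j hlt hj
      rw [← heq, disjoint_self_iff_empty, ← card_eq_zero, hcard i (by omega)] at hempty
      omega
  refine ⟨fun i => P i, fun i j hij => ?_, fun i => (hP i i.2).1, fun i => hcard i i.2,
    fun i j hij => ?_, fun i j hij => disjoint_iff_inter_eq_empty.1 (hdisj i j hij j.2)⟩
  · rcases lt_trichotomy i j with hlt | heq | hlt
    · exact (hne i j hlt j.2 hij).elim
    · exact heq
    · exact (hne j i hlt i.2 hij.symm).elim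
  · simpa only [hij] using hadj i (hij ▸ j.2)

/-- Some linear path of length `m` in `F` with free end `v` avoids `W`. -/
def HasPathTo (F : Finset (Finset α)) (m : ℕ) (v : α) (W : Finset α) : Prop :=
  ∃ B, LinearPathTo F m v B ∧ Disjoint B W

namespace HasPathTo

variable {F G : Finset (Finset α)} {k w m : ℕ} {v x : α} {W W' U N : Finset α}

lemma zero (hv : v ∉ W) : HasPathTo F 0 v W :=
  ⟨{v}, .nil v, disjoint_singleton_left.2 hv⟩

lemma end_notMem (h : HasPathTo F m v W) : v ∉ W := by
  obtain ⟨B, hB, hBW⟩ := h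
  exact disjoint_left.1 hBW hB.end_mem

lemma mono (h : HasPathTo F m v W) (hFG : F ⊆ G) : HasPathTo G m v W := by
  obtain ⟨B, hB, hBW⟩ := h
  exact ⟨B, hB.mono hFG, hBW⟩

lemma anti (h : HasPathTo F m v W) (hW : W' ⊆ W) : HasPathTo F m v W' := by
  obtain ⟨B, hB, hBW⟩ := h
  exact ⟨B, hB, disjoint_of_subset_right hW hBW⟩

lemma exists_extension (hF : (F : Set (Finset α)).Sized k) (h : HasPathTo F m v W) (hvU : v ∈ U)
    (hUW : U.erase v ⊆ W) (hU : IsKernel w F U) (hw : k * m + 1 + #W ≤ w) :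
    ∃ E ∈ F, U ⊆ E ∧ ∀ x ∈ E, x ≠ v → HasPathTo F (m + 1) x (W \ U) := by
  obtain ⟨B, hB, hBW⟩ := h
  obtain ⟨E, hE, hUE, hEBW⟩ := hU (B ∪ W) (by
    have := card_union_le B W
    have := hB.card_le hF
    omega)
  have hEB : E ∩ B = {v} := by
    ext y
    have hvB := hB.end_mem
    simp only [disjoint_left, subset_iff, mem_sdiff, mem_union, mem_erase] at *
    grind
  refine ⟨E, hE, hUE, fun x hxE hxv => ⟨B ∪ E, .snoc hB hE hEB hxE hxv, ?_⟩⟩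
  simp only [disjoint_left, mem_sdiff, mem_union] at *
  grind

lemma step (hF : (F : Set (Finset α)).Sized k) (h : HasPathTo F m v W) (hx : x ∈ W)
    (hK : IsKernel w F {v, x}) (hw : k * m + 1 + #W ≤ w) : HasPathTo F (m + 1) x (W.erase x) := by
  have hvW := h.end_notMem
  obtain ⟨E, -, hUE, hE⟩ := h.exists_extension hF (U := {v, x}) (by simp) (by grind) hK hw
  exact (hE x (hUE (by simp)) (by grind)).anti fun y hy => by grind

lemma exists_step (hF : (F : Set (Finset α)).Sized k) (h : HasPathTo F m v W)
    (hK : ∀ y ∈ N, IsKernel w F {v, y}) (hNW : Disjoint N W) (hN : k * m + 1 < #N)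
    (hw : k * m + 1 + (#W + 1) ≤ w) : ∃ y ∈ N, HasPathTo F (m + 1) y W := by
  obtain ⟨B, hB, hBW⟩ := h
  obtain ⟨y, hyN, hyB⟩ := exists_mem_notMem_of_card_lt_card ((hB.card_le hF).trans_lt hN)
  have hyW : y ∉ W := disjoint_left.1 hNW hyN
  have hins : HasPathTo F m v (insert y W) := ⟨B, hB, disjoint_insert_right.2 ⟨hyB, hBW⟩⟩
  have hstep := hins.step hF (mem_insert_self y W) (hK y hyN) (by rwa [card_insert_of_notMem hyW])
  exact ⟨y, hyN, by rwa [erase_insert hyW] at hstep⟩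

lemma exists_weave (hF : (F : Set (Finset α)).Sized k) {S : Finset α} (hSN : Disjoint S N)
    (hK : ∀ x ∈ S, ∀ y ∈ N, IsKernel w F {x, y}) {y : α} (hy : y ∈ N) (h : HasPathTo F m y S)
    (hw : k * (m + 2 * #S) + 1 + #S ≤ w) (hN : w < #N) :
    ∃ z, HasPathTo F (m + 2 * #S) z ∅ := by
  induction S using Finset.induction_on generalizing m y with
  | empty => exact ⟨y, h⟩
  | @insert x S hxS ih =>
    rw [card_insert_of_notMem hxS] at hw ⊢
    rw [disjoint_insert_left] at hSN
    have hlen : m + 2 * (#S + 1) = m + 2 + 2 * #S := by ring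
    have hkm : k * (m + 1) ≤ k * (m + 2 * (#S + 1)) := Nat.mul_le_mul_left _ (by omega)
    have hm : k * m ≤ k * (m + 1) := Nat.mul_le_mul_left _ (by omega)
    have hstep := h.step hF (mem_insert_self x S) (pair_comm x y ▸ hK x (mem_insert_self x S) y hy)
      (by rw [card_insert_of_notMem hxS]; omega)
    rw [erase_insert hxS] at hstep
    obtain ⟨y', hy', h'⟩ := hstep.exists_step hF (hK x (mem_insert_self x S)) hSN.2.symm
      (by omega) (by omega)
    rw [hlen] at hw ⊢
    exact ih hSN.2 (fun z hz => hK z (mem_insert_of_mem hz)) hy' h' (by omega)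

end HasPathTo

end LinearPath

section Core

variable {α ι : Type*} [DecidableEq α] {k w : ℕ} {F G : Finset (Finset α)}

/-- All sets between `C` and `E` are kernels of `F`. The members of `F` with a core `{x}` behave
like those of a full star with center `x`, and the ones with a core `{u, v}` like those of the
family of all sets through `u` and `v`. -/
def IsCore (w : ℕ) (F : Finset (Finset α)) (E C : Finset α) : Prop :=
  C ⊆ E ∧ ∀ U, C ⊆ U → U ⊆ E → IsKernel w F U

lemma IsCore.mono {E C : Finset α} (hC : IsCore w F E C) (hFG : F ⊆ G) : IsCore w G E C :=
  ⟨hC.1, fun U hCU hUE => (hC.2 U hCU hUE).mono hFG⟩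

namespace IsHomogeneous

variable [DecidableEq ι] {H : Finset (Finset α)} {χ : α → ι} {A : Finset (Finset ι)}
  {E : Finset α}

lemma isCore (hH : IsHomogeneous w H χ A) (hE : E ∈ H) {C : Finset α} (hCE : C ⊆ E)
    (hC : ∀ c, (∀ x ∈ C, χ x ≠ c) → {c} ∈ A) : IsCore w H E C := by
  refine ⟨hCE, fun U hCU hUE => ?_⟩
  have hmem : (E \ U).image χ ∈ A := by
    refine mem_of_forall_exists_mem_subset (hH.empty_mem ⟨E, hE⟩) (hH.supClosed ⟨E, hE⟩)
      fun c hc => ⟨{c}, hC c fun x hx hxc => ?_, mem_singleton_self c, singleton_subset_iff.2 hc⟩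
    obtain ⟨y, hy, hyc⟩ := mem_image.1 hc
    obtain ⟨hyE, hyU⟩ := mem_sdiff.1 hy
    exact hyU ((hH.rainbow E hE).eq_of_color_eq (hCE hx) hyE (hxc.trans hyc.symm) ▸ hCU hx)
  rwa [hH.mem_iff E hE, avoidColors_image_sdiff (hH.rainbow E hE) hUE] at hmem

variable [Fintype ι]

lemma isKernel_singleton (hH : IsHomogeneous w H χ A) (hE : E ∈ H) {v : α} (hv : v ∈ E)
    (hA : univ.erase (χ v) ∈ A) : IsKernel w H {v} := by
  rwa [hH.mem_iff E hE, avoidColors_univ_erase (hH.rainbow E hE) hv] at hA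

lemma exists_hasPathTo (hH : IsHomogeneous w H χ A) (hne : H.Nonempty)
    (hcard : (H : Set (Finset α)).Sized k) {p q : ι} (hpq : p ≠ q) (hp : univ.erase p ∈ A)
    (hq : univ.erase q ∈ A) {ℓ : ℕ} (hw : k * ℓ + 1 ≤ w) : ∃ v, HasPathTo H ℓ v ∅ := by
  -- The path alternates between end vertices of colors `p` and `q`.
  suffices h : ∀ m ≤ ℓ, ∃ E ∈ H, ∃ v ∈ E, (χ v = p ∨ χ v = q) ∧ HasPathTo H m v ∅ by
    obtain ⟨-, -, v, -, -, hv⟩ := h ℓ le_rfl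
    exact ⟨v, hv⟩
  intro m hm
  induction m with
  | zero =>
    obtain ⟨E, hE⟩ := hne
    obtain ⟨v, hvE, hv⟩ := (hH.rainbow E hE).exists_color_eq p
    exact ⟨E, hE, v, hvE, Or.inl hv, .zero (notMem_empty v)⟩
  | succ m ih =>
    obtain ⟨E, hE, v, hvE, hχv, hpath⟩ := ih (by omega)
    have hker : IsKernel w H {v} :=
      hH.isKernel_singleton hE hvE (by rcases hχv with h | h <;> rwa [h])
    have hkm : k * m ≤ k * ℓ := Nat.mul_le_mul_left _ (by omega)
    obtain ⟨E', hE', -, hext⟩ := hpath.exists_extension hcard (mem_singleton_self v) (by simp) hker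
      (by rw [card_empty]; omega)
    obtain ⟨c, hc, hcv⟩ : ∃ c, (c = p ∨ c = q) ∧ c ≠ χ v := by
      rcases hχv with h | h
      · exact ⟨q, Or.inr rfl, h ▸ hpq.symm⟩
      · exact ⟨p, Or.inl rfl, h ▸ hpq⟩
    obtain ⟨y, hyE', rfl⟩ := (hH.rainbow E' hE').exists_color_eq c
    exact ⟨E', hE', y, hyE', hc, by simpa using hext y hyE' (ne_of_apply_ne χ hcv)⟩

end IsHomogeneous

variable [Finite α] {V : Finset α}

lemma exists_isHomogeneous_of_card_lt [DecidableEq ι] [Fintype ι] [Nonempty ι] {j : ℕ}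
    {Q : Finset (Finset α)} (hQ : (Q : Set (Finset α)).Sized (Fintype.card ι))
    (hV : ∀ E ∈ Q, E ⊆ V)
    (hlt : homogeneityConst (Fintype.card ι) * (w ^ j * #V ^ (Fintype.card ι - j)) < #Q) :
    ∃ H ⊆ Q, H.Nonempty ∧ ∃ (χ : α → ι) (A : Finset (Finset ι)), IsHomogeneous w H χ A ∧
      ∀ B, #B = j → ∃ T ∈ A, T.Nonempty ∧ T ⊆ B := by
  obtain ⟨H, hHQ, χ, A, hH, hcard⟩ := exists_isHomogeneous (ι := ι) w Q hQ
  have hne : H.Nonempty := by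
    rw [nonempty_iff_ne_empty]
    rintro rfl
    rw [card_empty, mul_zero] at hcard
    omega
  refine ⟨H, hHQ, hne, χ, A, hH, fun B hB => ?_⟩
  by_contra! hcon
  have hHcard := hH.card_le (fun E hE => hV E (hHQ hE)) fun T' hT' hT'ne hT'A =>
    hcon T' hT'A hT'ne hT'
  rw [hB] at hHcard
  exact hlt.not_ge (hcard.trans (Nat.mul_le_mul_left _ hHcard))

lemma card_le_of_forall_not_isCore_singleton {ℓ : ℕ} (hk : 4 ≤ k) (hw : k * ℓ + 1 ≤ w)
    (hF : (F : Set (Finset α)).Sized k) (hV : ∀ E ∈ F, E ⊆ V) (hfree : ∀ v, ¬ HasPathTo F ℓ v ∅)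
    {Q : Finset (Finset α)} (hQF : Q ⊆ F) (hQ : ∀ E ∈ Q, ∀ x, ¬ IsCore w F E {x}) :
    #Q ≤ homogeneityConst k * (w ^ 2 * #V ^ (k - 2)) := by
  by_contra! hlt
  have : Nonempty (Fin k) := ⟨⟨0, by omega⟩⟩
  rw [← Fintype.card_fin k] at hlt hk
  obtain ⟨H, hHQ, hne, χ, A, hH, hpairs⟩ := exists_isHomogeneous_of_card_lt
    (fun E hE => (hF (hQF hE)).trans (Fintype.card_fin k).symm) (fun E hE => hV E (hQF hE)) hlt
  have hHF := hHQ.trans hQF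
  rcases forall_ne_singleton_mem_or_exists_univ_erase_mem hk (hH.empty_mem hne) (hH.supClosed hne)
    hpairs with ⟨c, hc⟩ | ⟨p, q, hpq, hp, hq⟩
  · obtain ⟨E, hE⟩ := hne
    obtain ⟨x, hxE, rfl⟩ := (hH.rainbow E hE).exists_color_eq c
    refine hQ E (hHQ hE) x ((hH.isCore hE (singleton_subset_iff.2 hxE) fun d hd => ?_).mono hHF)
    exact hc d (hd x (mem_singleton_self x)).symm
  · obtain ⟨v, hv⟩ := hH.exists_hasPathTo hne (fun E hE => hF (hHF hE)) hpq hp hq hw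
    exact hfree v (hv.mono hHF)

end Core

section SingleIntersectionFree

variable {α : Type*} [DecidableEq α] {k w : ℕ} {F : Finset (Finset α)}

/-- No two members of `F` meet in exactly one vertex, that is, `F` contains no linear path of
length two. -/
def SingleIntersectionFree (F : Finset (Finset α)) : Prop :=
  ∀ E ∈ F, ∀ E' ∈ F, #(E ∩ E') ≠ 1

lemma SingleIntersectionFree.card_inter_ne_one (hfree : SingleIntersectionFree F)
    {E U : Finset α} (hE : E ∈ F) (hw : #E ≤ w) (hU : IsKernel w F U) : #(U ∩ E) ≠ 1 := by
  obtain ⟨E', hE', hUE', hdisj⟩ := hU E hw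
  have hinter : E' ∩ E = U ∩ E := by
    ext x
    simp only [disjoint_left, mem_sdiff, mem_inter] at hdisj ⊢
    exact ⟨fun ⟨hx, hxE⟩ => ⟨by_contra fun hxU => hdisj ⟨hx, hxU⟩ hxE, hxE⟩,
      fun ⟨hx, hxE⟩ => ⟨hUE' hx, hxE⟩⟩
  exact hinter ▸ hfree E' hE' E hE

/-- `E` splits into two kernels of size two. In a family of `4`-sets without two members meeting
in a single vertex this is the only alternative to `E` having a core of size two. -/
def IsUnionOfTwoKernels (w : ℕ) (F : Finset (Finset α)) (E : Finset α) : Prop :=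
  ∃ e f : Finset α, #e = 2 ∧ #f = 2 ∧ Disjoint e f ∧ E = e ∪ f ∧ IsKernel w F e ∧ IsKernel w F f

lemma IsHomogeneous.isUnionOfTwoKernels {ι : Type*} [DecidableEq ι] [Fintype ι]
    {H : Finset (Finset α)} {χ : α → ι} {A : Finset (Finset ι)} (hH : IsHomogeneous w H χ A)
    (hcard : Fintype.card ι = 4) {B : Finset ι} (hB : #B = 2) (hBA : B ∈ A) (hBcA : Bᶜ ∈ A)
    {E : Finset α} (hE : E ∈ H) : IsUnionOfTwoKernels w H E := by
  have hrainbow := hH.rainbow E hE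
  refine ⟨avoidColors χ E B, avoidColors χ E Bᶜ, ?_, ?_, ?_, ?_, (hH.mem_iff E hE _).1 hBA,
    (hH.mem_iff E hE _).1 hBcA⟩
  · rw [card_avoidColors hrainbow, card_compl, hB, hcard]
  · rw [card_avoidColors hrainbow, compl_compl, hB]
  · simp only [disjoint_left, mem_avoidColors, mem_compl]
    tauto
  · ext x
    simp only [mem_union, mem_avoidColors, mem_compl]
    tauto

lemma IsUnionOfTwoKernels.mono {H : Finset (Finset α)} {E : Finset α}
    (h : IsUnionOfTwoKernels w H E) (hHF : H ⊆ F) : IsUnionOfTwoKernels w F E :=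
  let ⟨e, f, he, hf, hef, hE, hKe, hKf⟩ := h
  ⟨e, f, he, hf, hef, hE, hKe.mono hHF, hKf.mono hHF⟩

lemma SingleIntersectionFree.card_le_of_forall_not_isCore_pair [Finite α] {V : Finset α}
    (hfree : SingleIntersectionFree F) (hk : 4 ≤ k) (hw : k ≤ w)
    (hF : (F : Set (Finset α)).Sized k) (hV : ∀ E ∈ F, E ⊆ V) {Q : Finset (Finset α)}
    (hQF : Q ⊆ F) (hcore : ∀ E ∈ Q, ∀ C, #C = 2 → ¬ IsCore w F E C)
    (hunion : ∀ E ∈ Q, ¬ IsUnionOfTwoKernels w F E) :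
    #Q ≤ homogeneityConst k * (w ^ 3 * #V ^ (k - 3)) := by
  by_contra! hlt
  have : Nonempty (Fin k) := ⟨⟨0, by omega⟩⟩
  have hcardk := Fintype.card_fin k
  rw [← hcardk] at hlt hk
  obtain ⟨H, hHQ, hne, χ, A, hH, htriples⟩ := exists_isHomogeneous_of_card_lt
    (fun E hE => (hF (hQF hE)).trans hcardk.symm) (fun E hE => hV E (hQF hE)) hlt
  have hHF := hHQ.trans hQF
  obtain ⟨E, hE⟩ := id hne
  have hrainbow := hH.rainbow E hE
  have herase : ∀ p, univ.erase p ∉ A := by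
    intro p hp
    obtain ⟨v, hvE, rfl⟩ := hrainbow.exists_color_eq p
    refine hfree.card_inter_ne_one (hHF hE) ((hF (hHF hE)).trans_le hw)
      ((hH.isKernel_singleton hE hvE hp).mono hHF) ?_
    rw [singleton_inter_of_mem hvE, card_singleton]
  rcases exists_pair_forall_singleton_mem_or_exists_compl_mem hk (hH.empty_mem hne)
    (hH.supClosed hne) herase htriples with ⟨p, q, hpq, hpqA⟩ | ⟨hfour, B, hB, hBA, hBcA⟩
  · obtain ⟨u, huE, rfl⟩ := hrainbow.exists_color_eq p
    obtain ⟨v, hvE, rfl⟩ := hrainbow.exists_color_eq q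
    refine hcore E (hHQ hE) {u, v} (card_pair (ne_of_apply_ne χ hpq))
      ((hH.isCore hE (by simp [insert_subset_iff, huE, hvE]) fun c hc => ?_).mono hHF)
    exact hpqA c (hc u (by simp)).symm (hc v (by simp)).symm
  · exact hunion E (hHQ hE) ((hH.isUnionOfTwoKernels hfour hB hBA hBcA hE).mono hHF)

end SingleIntersectionFree

section KernelGraph

variable {α : Type*} [DecidableEq α]

open Classical in
lemma sum_card_filter_le_of_degenerate {r : α → α → Prop} (hr : ∀ a b, r a b → r b a) {d : ℕ}
    (hdeg : ∀ B : Finset α, B.Nonempty → ∃ v ∈ B, #{y ∈ B | y ≠ v ∧ r v y} ≤ d) (B : Finset α) :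
    ∑ v ∈ B, #{y ∈ B | y ≠ v ∧ r v y} ≤ 2 * d * #B := by
  induction B using Finset.strongInduction with
  | H B ih =>
    rcases B.eq_empty_or_nonempty with rfl | hne
    · simp
    obtain ⟨v, hv, hvd⟩ := hdeg B hne
    have hsplit : ∀ u ∈ B.erase v, #{y ∈ B | y ≠ u ∧ r u y} ≤
        #{y ∈ B.erase v | y ≠ u ∧ r u y} + if r v u then 1 else 0 := by
      intro u _
      conv_lhs => rw [← insert_erase hv, filter_insert]
      split_ifs with huv hvu hvu
      · exact card_insert_le _ _
      · exact absurd (hr u v huv.2) hvu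
      · omega
      · omega
    have hdegv : #{u ∈ B.erase v | r v u} ≤ d := by
      refine le_trans (card_le_card fun u hu => ?_) hvd
      simp only [mem_filter, mem_erase] at hu ⊢
      exact ⟨hu.1.2, hu.1.1, hu.2⟩
    calc ∑ u ∈ B, #{y ∈ B | y ≠ u ∧ r u y}
        = #{y ∈ B | y ≠ v ∧ r v y} + ∑ u ∈ B.erase v, #{y ∈ B | y ≠ u ∧ r u y} :=
          (add_sum_erase _ _ hv).symm
      _ ≤ d + ∑ u ∈ B.erase v, (#{y ∈ B.erase v | y ≠ u ∧ r u y} + if r v u then 1 else 0) :=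
          add_le_add hvd (sum_le_sum hsplit)
      _ = d + (∑ u ∈ B.erase v, #{y ∈ B.erase v | y ≠ u ∧ r u y} + #{u ∈ B.erase v | r v u}) := by
          rw [sum_add_distrib, ← card_filter]
      _ ≤ d + (2 * d * #(B.erase v) + d) := by gcongr; exact ih _ (erase_ssubset hv)
      _ = 2 * d * #B := by rw [← card_erase_add_one hv]; ring

open Classical in
lemma sum_card_filter_isKernel_pair_le {k w ℓ : ℕ} (hw : k * ℓ + 2 ≤ w) {F : Finset (Finset α)}
    (hF : (F : Set (Finset α)).Sized k) (hfree : ∀ v, ¬ HasPathTo F ℓ v ∅) (B : Finset α) :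
    ∑ v ∈ B, #{y ∈ B | y ≠ v ∧ IsKernel w F {v, y}} ≤ 2 * w * #B := by
  refine sum_card_filter_le_of_degenerate (fun a b h => pair_comm a b ▸ h) (fun B hne => ?_) B
  by_contra! hdeg
  suffices h : ∀ m ≤ ℓ, ∃ v ∈ B, HasPathTo F m v ∅ by
    obtain ⟨v, -, hv⟩ := h ℓ le_rfl
    exact hfree v hv
  intro m hm
  induction m with
  | zero =>
    obtain ⟨v, hv⟩ := hne
    exact ⟨v, hv, .zero (notMem_empty v)⟩
  | succ m ih =>
    obtain ⟨v, hv, hpath⟩ := ih (by omega)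
    have hkm : k * m ≤ k * ℓ := Nat.mul_le_mul_left _ (by omega)
    have hvN := hdeg v hv
    obtain ⟨y, hy, hpath'⟩ := hpath.exists_step hF
      (N := {y ∈ B | y ≠ v ∧ IsKernel w F {v, y}}) (fun y hy => (mem_filter.1 hy).2.2)
      (disjoint_empty_right _) (by omega) (by rw [card_empty]; omega)
    exact ⟨y, (mem_filter.1 hy).1, hpath'⟩

end KernelGraph

section Binomial

lemma pow_le_tsub_pow_add (n c j : ℕ) : n ^ j ≤ (n - c) ^ j + j * c * n ^ (j - 1) := by
  induction j with
  | zero => simp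
  | succ j ih =>
    have hshift : n * (j * c * n ^ (j - 1)) = j * c * n ^ j := by
      cases j with
      | zero => simp
      | succ j => rw [Nat.add_sub_cancel]; ring
    calc n ^ (j + 1) = n * n ^ j := by ring
      _ ≤ n * ((n - c) ^ j + j * c * n ^ (j - 1)) := Nat.mul_le_mul_left _ ih
      _ = n * (n - c) ^ j + j * c * n ^ j := by rw [mul_add, hshift]
      _ ≤ ((n - c) + c) * (n - c) ^ j + j * c * n ^ j := by gcongr; omega
      _ = (n - c) ^ (j + 1) + c * (n - c) ^ j + j * c * n ^ j := by ring
      _ ≤ (n - c) ^ (j + 1) + c * n ^ j + j * c * n ^ j := by gcongr; omega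
      _ = (n - c) ^ (j + 1) + (j + 1) * c * n ^ (j + 1 - 1) := by rw [Nat.add_sub_cancel]; ring

lemma pow_le_factorial_mul_choose_add (n a j : ℕ) :
    n ^ j ≤ j.factorial * (n - a).choose j + j * (a + j) * n ^ (j - 1) := by
  refine (pow_le_tsub_pow_add n (a + j) j).trans ?_
  gcongr
  rw [← Nat.descFactorial_eq_factorial_mul_choose]
  exact (Nat.pow_le_pow_left (by omega) j).trans (Nat.pow_sub_le_descFactorial (n - a) j)

lemma factorial_mul_choose_le_pow (n j : ℕ) : j.factorial * n.choose j ≤ n ^ j := by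
  rw [← Nat.descFactorial_eq_factorial_mul_choose]
  exact Nat.descFactorial_le_pow n j

lemma lt_choose_of_factorial_mul_add_le {n j d : ℕ} (hj : j ≠ 0)
    (h : j.factorial * d + j ≤ n) : d < n.choose j := by
  refine Nat.lt_of_mul_lt_mul_left (a := j.factorial) ?_
  calc j.factorial * d < n + 1 - j := by omega
    _ ≤ (n + 1 - j) ^ j := Nat.le_self_pow hj _
    _ ≤ j.factorial * n.choose j := by
      rw [← Nat.descFactorial_eq_factorial_mul_choose]
      exact Nat.pow_sub_le_descFactorial n j

end Binomial

section KernelPairs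

variable {α : Type*} [DecidableEq α] {k w : ℕ} {F : Finset (Finset α)} {V e : Finset α}

open Classical in
/-- The kernels of `F` of size two inside `V`. -/
noncomputable def kernelPairs (w : ℕ) (F : Finset (Finset α)) (V : Finset α) :
    Finset (Finset α) :=
  {e ∈ powersetCard 2 V | IsKernel w F e}

open Classical in
/-- The vertices of `V` outside `e` whose addition to `e` gives a kernel of `F`. -/
noncomputable def kernelExtensions (w : ℕ) (F : Finset (Finset α)) (V e : Finset α) : Finset α :=
  {y ∈ V | y ∉ e ∧ IsKernel w F (insert y e)}

open Classical in
lemma mem_kernelPairs : e ∈ kernelPairs w F V ↔ (e ⊆ V ∧ #e = 2) ∧ IsKernel w F e := by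
  rw [kernelPairs, mem_filter, mem_powersetCard]

open Classical in
lemma mem_kernelExtensions {y : α} :
    y ∈ kernelExtensions w F V e ↔ y ∈ V ∧ y ∉ e ∧ IsKernel w F (insert y e) := by
  rw [kernelExtensions, mem_filter]

lemma kernelExtensions_subset : kernelExtensions w F V e ⊆ V := fun _ hy =>
  (mem_kernelExtensions.1 hy).1

lemma disjoint_kernelExtensions : Disjoint e (kernelExtensions w F V e) :=
  disjoint_right.2 fun _ hy => (mem_kernelExtensions.1 hy).2.1

lemma disjoint_union_kernelExtensions {X : Finset α} (he : e ∈ kernelPairs w F V)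
    (hX : ∀ U, #U ≤ 3 → IsKernel w F U → #(U ∩ X) ≠ 1) (heX : ¬ e ⊆ X) :
    Disjoint (e ∪ kernelExtensions w F V e) X := by
  obtain ⟨⟨-, hcard⟩, hker⟩ := mem_kernelPairs.1 he
  have hlt : #(e ∩ X) < #e :=
    card_lt_card ⟨inter_subset_left, fun h => heX (h.trans inter_subset_right)⟩
  have hempty : e ∩ X = ∅ := by
    have := hX e (by omega) hker
    exact card_eq_zero.1 (by omega)
  refine disjoint_union_left.2 ⟨disjoint_iff_inter_eq_empty.2 hempty, disjoint_left.2 ?_⟩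
  intro y hy hyX
  refine hX _ ((card_insert_le y e).trans (by omega)) (mem_kernelExtensions.1 hy).2.2 ?_
  rw [insert_inter_of_mem hyX, hempty, insert_empty_eq, card_singleton]

open Classical in
lemma card_filter_isCore_le (hF : (F : Set (Finset α)).Sized k) (hV : ∀ E ∈ F, E ⊆ V) :
    #{E ∈ F | ∃ e, #e = 2 ∧ IsCore w F E e} ≤
      ∑ e ∈ kernelPairs w F V, (#(kernelExtensions w F V e)).choose (k - 2) := by
  calc #{E ∈ F | ∃ e, #e = 2 ∧ IsCore w F E e}
      ≤ #((kernelPairs w F V).biUnion fun e =>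
          (powersetCard (k - 2) (kernelExtensions w F V e)).image (e ∪ ·)) := card_le_card ?_
    _ ≤ ∑ e ∈ kernelPairs w F V, (#(kernelExtensions w F V e)).choose (k - 2) :=
      card_biUnion_le.trans (sum_le_sum fun e _ =>
        card_image_le.trans_eq (card_powersetCard _ _))
  intro E hE
  obtain ⟨hEF, e, he, heE, hcore⟩ := mem_filter.1 hE
  refine mem_biUnion.2 ⟨e, mem_kernelPairs.2 ⟨⟨heE.trans (hV E hEF), he⟩, hcore e Subset.rfl heE⟩,
    mem_image.2 ⟨E \ e, mem_powersetCard.2 ⟨fun y hy => ?_, ?_⟩, union_sdiff_of_subset heE⟩⟩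
  · obtain ⟨hyE, hye⟩ := mem_sdiff.1 hy
    exact mem_kernelExtensions.2
      ⟨hV E hEF hyE, hye, hcore _ (subset_insert y e) (insert_subset hyE heE)⟩
  · rw [card_sdiff_of_subset heE, hF hEF, he]

open Classical in
lemma card_filter_isUnionOfTwoKernels_le (hV : ∀ E ∈ F, E ⊆ V) :
    #{E ∈ F | IsUnionOfTwoKernels w F E} ≤ (#(kernelPairs w F V)).choose 2 := by
  rw [← card_powersetCard]
  refine (card_le_card fun E hE => ?_).trans (card_image_le (f := fun p => p.biUnion id))
  obtain ⟨hEF, e, f, he, hf, hef, rfl, hKe, hKf⟩ := mem_filter.1 hE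
  have hEV := union_subset_iff.1 (hV _ hEF)
  have hne : e ≠ f := by
    rintro rfl
    rw [disjoint_self_iff_empty] at hef
    simp [hef] at he
  refine mem_image.2 ⟨{e, f}, mem_powersetCard.2 ⟨?_, card_pair hne⟩, by simp⟩
  simp only [insert_subset_iff, singleton_subset_iff, mem_kernelPairs]
  exact ⟨⟨⟨hEV.1, he⟩, hKe⟩, ⟨hEV.2, hf⟩, hKf⟩

open Classical in
lemma factorial_mul_card_filter_isCore_le (hF : (F : Set (Finset α)).Sized k)
    (hV : ∀ E ∈ F, E ⊆ V) :
    (k - 2).factorial * #{E ∈ F | ∃ e, #e = 2 ∧ IsCore w F E e} ≤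
      ∑ e ∈ kernelPairs w F V, #(kernelExtensions w F V e) ^ (k - 2) :=
  calc (k - 2).factorial * #{E ∈ F | ∃ e, #e = 2 ∧ IsCore w F E e}
      ≤ ∑ e ∈ kernelPairs w F V,
          (k - 2).factorial * (#(kernelExtensions w F V e)).choose (k - 2) :=
        (Nat.mul_le_mul_left _ (card_filter_isCore_le hF hV)).trans_eq (mul_sum _ _ _)
    _ ≤ ∑ e ∈ kernelPairs w F V, #(kernelExtensions w F V e) ^ (k - 2) :=
        sum_le_sum fun _ _ => factorial_mul_choose_le_pow _ _

open Classical in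
lemma factorial_mul_card_filter_isUnionOfTwoKernels_le
    (hF : (F : Set (Finset α)).Sized k) (hV : ∀ E ∈ F, E ⊆ V) :
    (k - 2).factorial * #{E ∈ F | IsUnionOfTwoKernels w F E} ≤
      #(kernelPairs w F V) ^ 2 * #V ^ (k - 4) := by
  rcases eq_empty_or_nonempty {E ∈ F | IsUnionOfTwoKernels w F E} with hempty | ⟨E, hE⟩
  · simp [hempty]
  obtain ⟨hEF, e, f, he, hf, hef, rfl, -⟩ := mem_filter.1 hE
  obtain rfl : k = 4 := by rw [← hF hEF, card_union_of_disjoint hef, he, hf]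
  rw [Nat.sub_self, pow_zero, mul_one]
  exact (Nat.mul_le_mul_left _ (card_filter_isUnionOfTwoKernels_le hV)).trans
    (factorial_mul_choose_le_pow _ 2)

end KernelPairs

namespace SingleIntersectionFree

variable {α : Type*} [DecidableEq α] {k w : ℕ} {F : Finset (Finset α)} {V : Finset α}

lemma card_kernel_inter_kernel_ne_one (hfree : SingleIntersectionFree F)
    (hF : (F : Set (Finset α)).Sized k) (hw : k ≤ w) {U U' : Finset α} (hU : IsKernel w F U)
    (hU' : IsKernel w F U') (hcard : #U ≤ w) : #(U ∩ U') ≠ 1 := by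
  obtain ⟨E, hE, hU'E, hdisj⟩ := hU' U hcard
  have hinter : U ∩ E = U ∩ U' := by
    ext x
    simp only [disjoint_left, mem_sdiff, mem_inter] at hdisj ⊢
    exact ⟨fun ⟨hx, hxE⟩ => ⟨hx, by_contra fun hxU' => hdisj ⟨hxE, hxU'⟩ hx⟩,
      fun ⟨hx, hxU'⟩ => ⟨hx, hU'E hxU'⟩⟩
  exact hinter ▸ hfree.card_inter_ne_one hE ((hF hE).trans_le hw) hU

lemma disjoint_of_mem_kernelPairs (hfree : SingleIntersectionFree F)
    (hF : (F : Set (Finset α)).Sized k) (hw : k ≤ w) {e g : Finset α}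
    (he : e ∈ kernelPairs w F V) (hg : g ∈ F) (heg : ¬ e ⊆ g) :
    Disjoint (e ∪ kernelExtensions w F V e) g :=
  disjoint_union_kernelExtensions he
    (fun _ _ hU => hfree.card_inter_ne_one hg ((hF hg).trans_le hw) hU) heg

lemma pairwiseDisjoint_union_kernelExtensions (hfree : SingleIntersectionFree F)
    (hF : (F : Set (Finset α)).Sized k) (hk : 3 ≤ k) (hw : k ≤ w) :
    (kernelPairs w F V : Set (Finset α)).PairwiseDisjoint
      fun e => e ∪ kernelExtensions w F V e := by
  intro e he f hf hef
  rw [mem_coe] at he hf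
  have hdisj : ∀ X, IsKernel w F X → ¬ e ⊆ X → Disjoint (e ∪ kernelExtensions w F V e) X :=
    fun X hX => disjoint_union_kernelExtensions he fun U hU hKU =>
      hfree.card_kernel_inter_kernel_ne_one hF hw hKU hX (by omega)
  obtain ⟨⟨-, he2⟩, -⟩ := mem_kernelPairs.1 he
  obtain ⟨⟨-, hf2⟩, hfker⟩ := mem_kernelPairs.1 hf
  have hdisjf := hdisj f hfker fun h => hef (eq_of_subset_of_card_le h (by omega))
  refine disjoint_union_right.2 ⟨hdisjf, disjoint_right.2 fun y hy hy' => ?_⟩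
  refine disjoint_left.1 (hdisj _ (mem_kernelExtensions.1 hy).2.2 fun h => ?_) hy'
    (mem_insert_self y f)
  have hsub : e ⊆ {y} := fun x hx => mem_singleton.2 <| (mem_insert.1 (h hx)).resolve_right <|
    disjoint_left.1 hdisjf (mem_union_left _ hx)
  have := card_le_card hsub
  rw [card_singleton] at this
  omega

lemma sum_card_kernelExtensions_add_le (hfree : SingleIntersectionFree F)
    (hF : (F : Set (Finset α)).Sized k) (hk : 3 ≤ k) (hw : k ≤ w) :
    ∑ e ∈ kernelPairs w F V, #(kernelExtensions w F V e) + 2 * #(kernelPairs w F V) ≤ #V := by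
  have hcard : ∀ e ∈ kernelPairs w F V,
      #(e ∪ kernelExtensions w F V e) = #(kernelExtensions w F V e) + 2 := fun e he => by
    rw [card_union_of_disjoint disjoint_kernelExtensions, (mem_kernelPairs.1 he).1.2, add_comm]
  calc ∑ e ∈ kernelPairs w F V, #(kernelExtensions w F V e) + 2 * #(kernelPairs w F V)
      = ∑ e ∈ kernelPairs w F V, #(e ∪ kernelExtensions w F V e) := by
        rw [sum_congr rfl hcard, sum_add_distrib, sum_const, smul_eq_mul, mul_comm 2]
    _ = #((kernelPairs w F V).biUnion fun e => e ∪ kernelExtensions w F V e) :=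
        (card_biUnion (hfree.pairwiseDisjoint_union_kernelExtensions hF hk hw)).symm
    _ ≤ #V := card_le_card <| biUnion_subset.2 fun e he =>
        union_subset (mem_kernelPairs.1 he).1.1 kernelExtensions_subset

open Classical in
lemma factorial_mul_card_le [Finite α] (hfree : SingleIntersectionFree F) (hk : 4 ≤ k)
    (hw : k ≤ w) (hF : (F : Set (Finset α)).Sized k) (hV : ∀ E ∈ F, E ⊆ V) :
    (k - 2).factorial * #F ≤ ∑ e ∈ kernelPairs w F V, #(kernelExtensions w F V e) ^ (k - 2) +
      #(kernelPairs w F V) ^ 2 * #V ^ (k - 4) +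
      (k - 2).factorial * (homogeneityConst k * (w ^ 3 * #V ^ (k - 3))) := by
  set Q := {E ∈ F | ¬ (∃ e, #e = 2 ∧ IsCore w F E e) ∧ ¬ IsUnionOfTwoKernels w F E} with hQ
  have hQcard := hfree.card_le_of_forall_not_isCore_pair hk hw hF hV (filter_subset _ _ : Q ⊆ F)
    (fun E hE C hC hcore => (mem_filter.1 hE).2.1 ⟨C, hC, hcore⟩)
    (fun E hE => (mem_filter.1 hE).2.2)
  have hsplit : #F ≤ #{E ∈ F | ∃ e, #e = 2 ∧ IsCore w F E e} +
      #{E ∈ F | IsUnionOfTwoKernels w F E} + #Q := by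
    refine (card_le_card fun E hE => ?_).trans <|
      (card_union_le _ _).trans <| Nat.add_le_add_right (card_union_le _ _) _
    simp only [hQ, mem_union, mem_filter]
    grind
  calc (k - 2).factorial * #F
      ≤ (k - 2).factorial * #{E ∈ F | ∃ e, #e = 2 ∧ IsCore w F E e} +
          (k - 2).factorial * #{E ∈ F | IsUnionOfTwoKernels w F E} + (k - 2).factorial * #Q := by
        rw [← mul_add, ← mul_add]
        exact Nat.mul_le_mul_left _ hsplit
    _ ≤ _ := Nat.add_le_add (Nat.add_le_add (factorial_mul_card_filter_isCore_le hF hV)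
        (factorial_mul_card_filter_isUnionOfTwoKernels_le hF hV)) (Nat.mul_le_mul_left _ hQcard)

end SingleIntersectionFree

section Frankl

variable {α : Type*} [DecidableEq α] {k : ℕ} {F : Finset (Finset α)} {V : Finset α}

/-- The number of vertices that may fail to extend the largest kernel pair of a family of `k`-sets
without single intersections and with as many members as the family of all `k`-sets through two
fixed vertices. -/
noncomputable def franklConst (k : ℕ) : ℕ :=
  (k - 2) * (2 + (k - 2)) + (k - 2).factorial * (homogeneityConst k * k ^ 3)

lemma mul_add_sq_add_mul_lt_sq {n a s m c : ℕ} (hsm : s + 2 * m ≤ n) (hac : a + c < n)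
    (hc : 2 * c < n) : a * s + m ^ 2 + c * n < n ^ 2 := by
  rcases le_total n (4 * a) with hna | hna
  · have hs : a * (s + 2 * m) ≤ a * n := Nat.mul_le_mul_left _ hsm
    have hm : m * (2 * m) ≤ m * (4 * a) := Nat.mul_le_mul_left _ (by omega)
    have hn : (a + c) * n < n * n := Nat.mul_lt_mul_of_pos_right hac (by omega)
    nlinarith
  · have hs : 4 * a * s ≤ n * n := Nat.mul_le_mul hna (by omega)
    have hm : 2 * m * (2 * m) ≤ n * n := Nat.mul_le_mul (by omega) (by omega)
    have hn : 2 * c * n < n * n := Nat.mul_lt_mul_of_pos_right hc (by omega)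
    nlinarith

lemma SingleIntersectionFree.exists_kernelPair_card_le [Finite α]
    (hfree : SingleIntersectionFree F) (hk : 4 ≤ k) (hF : (F : Set (Finset α)).Sized k)
    (hV : ∀ E ∈ F, E ⊆ V) (hcard : (#V - 2).choose (k - 2) ≤ #F) (hn : 2 * franklConst k < #V) :
    ∃ e ∈ kernelPairs k F V, #V ≤ #(kernelExtensions k F V e) + franklConst k := by
  by_contra! hsmall
  set n := #V
  set M := kernelPairs k F V
  obtain ⟨j, rfl⟩ := Nat.exists_eq_add_of_le' hk
  set a := n - franklConst (j + 4) - 1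
  have hpow : ∀ e ∈ M, #(kernelExtensions (j + 4) F V e) ^ (j + 2) ≤
      n ^ j * (a * #(kernelExtensions (j + 4) F V e)) := by
    intro e he
    have hea : #(kernelExtensions (j + 4) F V e) ≤ a := by have := hsmall e he; omega
    calc #(kernelExtensions (j + 4) F V e) ^ (j + 2)
        = #(kernelExtensions (j + 4) F V e) ^ j *
          (#(kernelExtensions (j + 4) F V e) * #(kernelExtensions (j + 4) F V e)) := by ring
      _ ≤ n ^ j * (a * #(kernelExtensions (j + 4) F V e)) := by gcongr; omega
  have hbound : n ^ j * n ^ 2 ≤ n ^ j * (a * ∑ e ∈ M, #(kernelExtensions (j + 4) F V e) +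
      #M ^ 2 + franklConst (j + 4) * n) := by
    calc n ^ j * n ^ 2 = n ^ (j + 2) := (pow_add n j 2).symm
      _ ≤ (j + 2).factorial * (n - 2).choose (j + 2) + (j + 2) * (2 + (j + 2)) * n ^ (j + 1) :=
        pow_le_factorial_mul_choose_add n 2 (j + 2)
      _ ≤ (j + 2).factorial * #F + (j + 2) * (2 + (j + 2)) * n ^ (j + 1) := by gcongr; exact hcard
      _ ≤ ∑ e ∈ M, #(kernelExtensions (j + 4) F V e) ^ (j + 2) + #M ^ 2 * n ^ j +
          (j + 2).factorial * (homogeneityConst (j + 4) * ((j + 4) ^ 3 * n ^ (j + 1))) +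
          (j + 2) * (2 + (j + 2)) * n ^ (j + 1) := by
        gcongr
        exact hfree.factorial_mul_card_le hk le_rfl hF hV
      _ ≤ ∑ e ∈ M, n ^ j * (a * #(kernelExtensions (j + 4) F V e)) + #M ^ 2 * n ^ j +
          (j + 2).factorial * (homogeneityConst (j + 4) * ((j + 4) ^ 3 * n ^ (j + 1))) +
          (j + 2) * (2 + (j + 2)) * n ^ (j + 1) := by gcongr with e he; exact hpow e he
      _ = _ := by
        rw [← mul_sum, ← mul_sum, franklConst, show j + 4 - 2 = j + 2 from rfl]
        ring
  refine (Nat.le_of_mul_le_mul_left hbound (pow_pos (by omega) j)).not_gt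
    (mul_add_sq_add_mul_lt_sq ?_ (by omega) hn)
  exact hfree.sum_card_kernelExtensions_add_le hF (by omega) le_rfl

lemma SingleIntersectionFree.card_filter_not_subset_le (hfree : SingleIntersectionFree F)
    (hF : (F : Set (Finset α)).Sized k) (hV : ∀ E ∈ F, E ⊆ V) {e : Finset α}
    (he : e ∈ kernelPairs k F V) :
    #{E ∈ F | ¬ e ⊆ E} ≤ 2 ^ (#V - #(kernelExtensions k F V e)) := by
  rw [← card_sdiff_of_subset kernelExtensions_subset, ← card_powerset]
  refine card_le_card fun g hg => mem_powerset.2 fun x hx => ?_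
  obtain ⟨hgF, heg⟩ := mem_filter.1 hg
  exact mem_sdiff.2 ⟨hV g hgF hx, fun hxe => disjoint_left.1
    (hfree.disjoint_of_mem_kernelPairs hF le_rfl he hgF heg) (mem_union_right e hxe) hx⟩

lemma SingleIntersectionFree.choose_add_card_filter_le (hfree : SingleIntersectionFree F)
    (hF : (F : Set (Finset α)).Sized k) (hk : 3 ≤ k) (hV : ∀ E ∈ F, E ⊆ V) {e g : Finset α}
    (heV : e ⊆ V) (he : #e = 2) (hg : g ∈ F) (heg : Disjoint e g) :
    (#V - (k + 2)).choose (k - 3) + #{E ∈ F | e ⊆ E} ≤ #{E ∈ powersetCard k V | e ⊆ E} := by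
  -- The sets containing `e` and meeting `g` only in `x` are all missing from `F`.
  obtain ⟨x, hx⟩ := card_pos.1 (by rw [hF hg]; omega : 0 < #g)
  have hxe : x ∉ e := disjoint_right.1 heg hx
  have hcard : #(insert x e) = 3 := by rw [card_insert_of_notMem hxe, he]
  have hground : insert x e ⊆ insert x (V \ g) :=
    insert_subset_insert x (subset_sdiff.2 ⟨heV, heg⟩)
  have hcount := card_filter_powersetCard_subset (insert x e) _ k hground (hcard.trans_le hk)
  rw [hcard, card_insert_of_notMem (fun h => (mem_sdiff.1 h).2 hx), card_sdiff_of_subset (hV g hg),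
    hF hg, show #V - k + 1 - 3 = #V - (k + 2) by omega] at hcount
  rw [← hcount, ← card_union_of_disjoint]
  · refine card_le_card (union_subset (fun E hE => ?_) fun E hE => ?_)
    · simp only [mem_filter, mem_powersetCard, insert_subset_iff] at hE ⊢
      exact ⟨⟨hE.1.1.trans (insert_subset (hV g hg hx) sdiff_subset), hE.1.2⟩, hE.2.2⟩
    · obtain ⟨hEF, heE⟩ := mem_filter.1 hE
      exact mem_filter.2 ⟨mem_powersetCard.2 ⟨hV E hEF, hF hEF⟩, heE⟩
  · refine disjoint_left.2 fun E hE hE' => hfree E (mem_filter.1 hE').1 g hg ?_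
    simp only [mem_filter, mem_powersetCard, insert_subset_iff] at hE
    refine card_eq_one.2 ⟨x, Subset.antisymm (fun y hy => ?_) ?_⟩
    · obtain ⟨hyE, hyg⟩ := mem_inter.1 hy
      exact mem_singleton.2 <| (mem_insert.1 (hE.1.1 hyE)).resolve_right fun h =>
        (mem_sdiff.1 h).2 hyg
    · exact singleton_subset_iff.2 (mem_inter.2 ⟨hE.2.1, hx⟩)

/-- The ground set size from which Frankl's exact bound for families without single intersections
is established. -/
noncomputable def franklThreshold (k : ℕ) : ℕ :=
  2 * franklConst k + 1 + ((k - 3).factorial * 2 ^ franklConst k + 2 * k)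

theorem SingleIntersectionFree.exists_eq_filter_subset [Finite α]
    (hfree : SingleIntersectionFree F) (hk : 4 ≤ k) (hF : (F : Set (Finset α)).Sized k)
    (hV : ∀ E ∈ F, E ⊆ V) (hn : franklThreshold k ≤ #V)
    (hcard : (#V - 2).choose (k - 2) ≤ #F) :
    ∃ e ⊆ V, #e = 2 ∧ F = {E ∈ powersetCard k V | e ⊆ E} := by
  rw [franklThreshold] at hn
  obtain ⟨e, he, hbig⟩ := hfree.exists_kernelPair_card_le hk hF hV hcard (by omega)
  obtain ⟨⟨heV, he2⟩, -⟩ := mem_kernelPairs.1 he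
  have hstar : #{E ∈ powersetCard k V | e ⊆ E} = (#V - 2).choose (k - 2) := by
    rw [card_filter_powersetCard_subset e V k heV (by omega), he2]
  have hrest : #{E ∈ F | ¬ e ⊆ E} ≤ 2 ^ franklConst k :=
    (hfree.card_filter_not_subset_le hF hV he).trans
      (Nat.pow_le_pow_right two_pos (by omega))
  have hall : ∀ g ∈ F, e ⊆ g := by
    by_contra! hcon
    obtain ⟨g, hg, heg⟩ := hcon
    have hdisj : Disjoint e g := disjoint_of_subset_left subset_union_left
      (hfree.disjoint_of_mem_kernelPairs hF le_rfl he hg heg)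
    have hmissing := hfree.choose_add_card_filter_le hF (by omega) hV heV he2 hg hdisj
    have hmany : 2 ^ franklConst k < (#V - (k + 2)).choose (k - 3) :=
      lt_choose_of_factorial_mul_add_le (by omega) (by omega)
    have hsplit := card_filter_add_card_filter_not (s := F) (e ⊆ ·)
    omega
  refine ⟨e, heV, he2, eq_of_subset_of_card_le (fun E hE => ?_) (hstar.trans_le hcard)⟩
  exact mem_filter.2 ⟨mem_powersetCard.2 ⟨hV E hE, hF hE⟩, hall E hE⟩

theorem SingleIntersectionFree.card_le [Finite α] (hfree : SingleIntersectionFree F) (hk : 4 ≤ k)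
    (hF : (F : Set (Finset α)).Sized k) (hV : ∀ E ∈ F, E ⊆ V) (hn : franklThreshold k ≤ #V) :
    #F ≤ (#V - 2).choose (k - 2) := by
  by_contra! hcard
  obtain ⟨e, heV, he, hFe⟩ := hfree.exists_eq_filter_subset hk hF hV hn hcard.le
  rw [hFe, card_filter_powersetCard_subset e V k heV (by omega), he] at hcard
  exact hcard.false

end Frankl

section KernelNeighbors

variable {α : Type*} [DecidableEq α] [Fintype α] {k w ℓ t : ℕ} {F G : Finset (Finset α)}
  {S E : Finset α} {x y : α}

open Classical in
/-- The neighbors of `x` in the graph whose edges are the kernels of `F` of size two. -/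
noncomputable def kernelNeighbors (w : ℕ) (F : Finset (Finset α)) (x : α) : Finset α :=
  {y | y ≠ x ∧ IsKernel w F {x, y}}

/-- The common neighbors of the vertices of `S` in the graph of kernels of size two. -/
noncomputable def commonKernelNeighbors (w : ℕ) (F : Finset (Finset α)) (S : Finset α) :
    Finset α :=
  {y | ∀ x ∈ S, y ∈ kernelNeighbors w F x}

open Classical in
lemma mem_kernelNeighbors : y ∈ kernelNeighbors w F x ↔ y ≠ x ∧ IsKernel w F {x, y} := by
  rw [kernelNeighbors, mem_filter_univ]

lemma mem_commonKernelNeighbors :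
    y ∈ commonKernelNeighbors w F S ↔ ∀ x ∈ S, y ∈ kernelNeighbors w F x := by
  rw [commonKernelNeighbors, mem_filter_univ]

lemma disjoint_commonKernelNeighbors : Disjoint S (commonKernelNeighbors w F S) :=
  disjoint_left.2 fun x hxS hx =>
    (mem_kernelNeighbors.1 (mem_commonKernelNeighbors.1 hx x hxS)).1 rfl

lemma isKernel_pair_of_mem_commonKernelNeighbors (hx : x ∈ S)
    (hy : y ∈ commonKernelNeighbors w F S) : IsKernel w F {x, y} :=
  (mem_kernelNeighbors.1 (mem_commonKernelNeighbors.1 hy x hx)).2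

lemma IsCore.erase_subset_kernelNeighbors (hE : IsCore w F E {x}) :
    E.erase x ⊆ kernelNeighbors w F x := by
  intro y hy
  obtain ⟨hyx, hyE⟩ := mem_erase.1 hy
  have hxE := singleton_subset_iff.1 hE.1
  exact mem_kernelNeighbors.2
    ⟨hyx, hE.2 {x, y} (by simp) (by simp [insert_subset_iff, hxE, hyE])⟩

lemma sum_card_kernelNeighbors_le (hw : k * ℓ + 2 ≤ w) (hF : (F : Set (Finset α)).Sized k)
    (hfree : ∀ v, ¬ HasPathTo F ℓ v ∅) :
    ∑ x, #(kernelNeighbors w F x) ≤ 2 * w * Fintype.card α :=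
  sum_card_filter_isKernel_pair_le hw hF hfree univ

lemma card_commonKernelNeighbors_le (hF : (F : Set (Finset α)).Sized k)
    (hfree : ∀ v, ¬ HasPathTo F (2 * #S) v ∅) (hw : k * (2 * #S) + 1 + #S ≤ w) :
    #(commonKernelNeighbors w F S) ≤ w := by
  by_contra! hN
  obtain ⟨y, hy⟩ := card_pos.1 (Nat.zero_lt_of_lt hN)
  obtain ⟨z, hz⟩ := HasPathTo.exists_weave hF disjoint_commonKernelNeighbors
    (fun x hx y hy => isKernel_pair_of_mem_commonKernelNeighbors hx hy) hy
    (HasPathTo.zero (disjoint_right.1 disjoint_commonKernelNeighbors hy)) (by rwa [zero_add]) hN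
  exact hfree z (by rwa [zero_add] at hz)

lemma card_le_sum_choose {D : α → Finset α} (hG : (G : Set (Finset α)).Sized k)
    (hD : ∀ E ∈ G, ∃ x ∈ E, E.erase x ⊆ D x) : #G ≤ ∑ x, (#(D x)).choose (k - 1) := by
  have hcover : G ⊆ univ.biUnion fun x => (powersetCard (k - 1) (D x)).image (insert x) := by
    intro E hE
    obtain ⟨x, hxE, hxD⟩ := hD E hE
    refine mem_biUnion.2 ⟨x, mem_univ x, mem_image.2 ⟨E.erase x, ?_, insert_erase hxE⟩⟩
    exact mem_powersetCard.2 ⟨hxD, by rw [card_erase_of_mem hxE, hG hE]⟩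
  refine (card_le_card hcover).trans (card_biUnion_le.trans (sum_le_sum fun x _ => ?_))
  exact card_image_le.trans (card_powersetCard _ _).le

open Classical in
lemma card_le_add_sum_choose {D : α → Finset α} (hk : 4 ≤ k) (hw : k * ℓ + 1 ≤ w)
    (hF : (F : Set (Finset α)).Sized k) (hfree : ∀ v, ¬ HasPathTo F ℓ v ∅) (hGF : G ⊆ F)
    (hD : ∀ E ∈ G, ∀ x, IsCore w F E {x} → E.erase x ⊆ D x) :
    #G ≤ homogeneityConst k * w ^ 2 * Fintype.card α ^ (k - 2) +
      ∑ x, (#(D x)).choose (k - 1) := by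
  rw [← card_filter_add_card_filter_not (s := G) (fun E => ∀ x, ¬ IsCore w F E {x}), mul_assoc,
    ← card_univ (α := α)]
  refine add_le_add ?_ (card_le_sum_choose (fun E hE => ?_) fun E hE => ?_)
  · exact card_le_of_forall_not_isCore_singleton hk hw hF (fun E _ => subset_univ E) hfree
      ((filter_subset _ _).trans hGF) fun E hE => (mem_filter.1 hE).2
  · exact hF (hGF (mem_filter.1 hE).1)
  · obtain ⟨hEG, hEcore⟩ := mem_filter.1 hE
    push Not at hEcore
    obtain ⟨x, hx⟩ := hEcore
    exact ⟨x, singleton_subset_iff.1 hx.1, hD E hEG x hx⟩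

end KernelNeighbors

section DegreeCount

variable {α : Type*} {X : Finset α} {n t A B : ℕ}

lemma sum_card_le_of_card_common_le [DecidableEq α] [Fintype α] {D : α → Finset α} {w : ℕ}
    (hD : ∀ T ⊆ X, #T = t + 1 → #{y | ∀ x ∈ T, y ∈ D x} ≤ w) :
    ∑ x ∈ X, #(D x) ≤ t * Fintype.card α + (#X).choose (t + 1) * w * #X := by
  have hswap : ∑ x ∈ X, #(D x) = ∑ y, #{x ∈ X | y ∈ D x} := by
    have := sum_card_bipartiteAbove_eq_sum_card_bipartiteBelow (s := X) (t := univ)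
      (fun x y => y ∈ D x)
    simpa [bipartiteAbove, bipartiteBelow] using this
  have hheavy : #{y | t < #{x ∈ X | y ∈ D x}} ≤ (#X).choose (t + 1) * w := by
    have hcover : ({y | t < #{x ∈ X | y ∈ D x}} : Finset α) ⊆
        (powersetCard (t + 1) X).biUnion fun T => {y | ∀ x ∈ T, y ∈ D x} := by
      intro y hy
      obtain ⟨T, hT, hTcard⟩ :=
        exists_subset_card_eq (Nat.succ_le_of_lt ((mem_filter_univ y).1 hy))
      refine mem_biUnion.2 ⟨T, mem_powersetCard.2 ⟨hT.trans (filter_subset _ _), hTcard⟩, ?_⟩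
      exact (mem_filter_univ y).2 fun x hx => (mem_filter.1 (hT hx)).2
    rw [← card_powersetCard]
    refine (card_le_card hcover).trans (card_biUnion_le_card_mul _ _ _ fun T hT => ?_)
    exact hD T (mem_powersetCard.1 hT).1 (mem_powersetCard.1 hT).2
  calc ∑ x ∈ X, #(D x) = ∑ y, #{x ∈ X | y ∈ D x} := hswap
    _ ≤ ∑ y, (t + if t < #{x ∈ X | y ∈ D x} then #X else 0) := sum_le_sum fun y _ => by
        have := card_filter_le X (fun x => y ∈ D x)
        split_ifs <;> omega
    _ = t * Fintype.card α + #{y | t < #{x ∈ X | y ∈ D x}} * #X := by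
        rw [sum_add_distrib, ← sum_filter, sum_const, sum_const, card_univ, smul_eq_mul,
          smul_eq_mul, mul_comm t]
    _ ≤ t * Fintype.card α + (#X).choose (t + 1) * w * #X := by gcongr

lemma sum_mul_tsub_le {d : α → ℕ} (hd : ∀ x ∈ X, d x ≤ n) (hsum : ∑ x ∈ X, d x ≤ t * n + A)
    (hsq : t * n ^ 2 ≤ ∑ x ∈ X, d x ^ 2 + B) : ∑ x ∈ X, d x * (n - d x) ≤ A * n + B := by
  have hsplit : ∑ x ∈ X, d x * (n - d x) + ∑ x ∈ X, d x ^ 2 = (∑ x ∈ X, d x) * n := by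
    rw [← sum_add_distrib, sum_mul]
    refine sum_congr rfl fun x hx => ?_
    rw [sq, ← mul_add, Nat.sub_add_cancel (hd x hx)]
  have := Nat.mul_le_mul_right n hsum
  nlinarith

lemma exists_subset_card_eq_forall_mul_tsub_le {d : α → ℕ} (hd : ∀ x ∈ X, d x ≤ n)
    (hsum : ∑ x ∈ X, d x ≤ t * n + A) (hsq : t * n ^ 2 ≤ ∑ x ∈ X, d x ^ 2 + B)
    (hn : 2 * (A * n + B) < n ^ 2) :
    ∃ S ⊆ X, #S = t ∧ ∀ x ∈ S, n * (n - d x) ≤ 2 * (A * n + B) := by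
  have hgap := sum_mul_tsub_le hd hsum hsq
  have hlow : ∑ x ∈ X with ¬ n ≤ 2 * d x, d x ^ 2 ≤ A * n + B := calc
    _ ≤ ∑ x ∈ X with ¬ n ≤ 2 * d x, d x * (n - d x) := sum_le_sum fun x hx => by
        rw [sq]
        have := (mem_filter.1 hx).2
        exact Nat.mul_le_mul_left _ (by omega)
    _ ≤ ∑ x ∈ X, d x * (n - d x) := sum_le_sum_of_subset (filter_subset _ _)
    _ ≤ A * n + B := hgap
  have hhigh : ∑ x ∈ X with n ≤ 2 * d x, d x ^ 2 ≤ #{x ∈ X | n ≤ 2 * d x} * n ^ 2 :=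
    sum_le_card_nsmul _ _ _ fun x hx => Nat.pow_le_pow_left (hd x (mem_filter.1 hx).1) 2
  have ht : t ≤ #{x ∈ X | n ≤ 2 * d x} := by
    rw [← sum_filter_add_sum_filter_not X (fun x => n ≤ 2 * d x)] at hsq
    refine Nat.lt_succ_iff.1 (Nat.lt_of_mul_lt_mul_right (a := n ^ 2) ?_)
    rw [Nat.succ_mul]
    omega
  obtain ⟨S, hS, hScard⟩ := exists_subset_card_eq ht
  refine ⟨S, hS.trans (filter_subset _ _), hScard, fun x hx => ?_⟩
  obtain ⟨hxX, hxn⟩ := mem_filter.1 (hS hx)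
  calc n * (n - d x) ≤ 2 * d x * (n - d x) := Nat.mul_le_mul_right _ hxn
    _ = 2 * (d x * (n - d x)) := mul_assoc _ _ _
    _ ≤ 2 * (A * n + B) := Nat.mul_le_mul_left _
        ((single_le_sum (fun _ _ => Nat.zero_le _) hxX).trans hgap)

end DegreeCount

section DominatingVertices

variable {α : Type*} [Fintype α] {c n J : ℕ} {d : α → ℕ}

lemma card_filter_le_mul_of_sum_le (hn : 0 < n) (hsum : ∑ x, d x ≤ c * n) :
    #{x | n ≤ J * d x} ≤ J * c := by
  refine Nat.le_of_mul_le_mul_right ?_ hn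
  calc #{x | n ≤ J * d x} * n ≤ ∑ x with n ≤ J * d x, J * d x :=
        card_nsmul_le_sum _ _ _ fun x hx => (mem_filter_univ x).1 hx
    _ ≤ ∑ x, J * d x := sum_le_sum_of_subset (subset_univ _)
    _ = J * ∑ x, d x := (mul_sum _ _ _).symm
    _ ≤ J * (c * n) := Nat.mul_le_mul_left _ hsum
    _ = J * c * n := (mul_assoc _ _ _).symm

lemma mul_sum_sq_le_of_sum_le (hsum : ∑ x, d x ≤ c * n) :
    J * ∑ x with ¬ n ≤ J * d x, d x ^ 2 ≤ c * n ^ 2 := calc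
  _ = ∑ x with ¬ n ≤ J * d x, J * d x ^ 2 := mul_sum _ _ _
  _ ≤ ∑ x with ¬ n ≤ J * d x, n * d x := sum_le_sum fun x hx => by
      rw [sq, ← mul_assoc]
      exact Nat.mul_le_mul_right _ (not_le.1 ((mem_filter_univ x).1 hx)).le
  _ ≤ ∑ x, n * d x := sum_le_sum_of_subset (subset_univ _)
  _ = n * ∑ x, d x := (mul_sum _ _ _).symm
  _ ≤ n * (c * n) := Nat.mul_le_mul_left _ hsum
  _ = c * n ^ 2 := by ring

variable [DecidableEq α] {D : α → Finset α} {t j w C : ℕ}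

lemma mul_card_compl_common_le {S : Finset α} {m : ℕ}
    (hS : ∀ x ∈ S, n * (Fintype.card α - #(D x)) ≤ m) :
    n * #({y | ∀ x ∈ S, y ∈ D x} : Finset α)ᶜ ≤ #S * m := by
  have hcover : ({y | ∀ x ∈ S, y ∈ D x} : Finset α)ᶜ ⊆ S.biUnion fun x => (D x)ᶜ := fun y hy => by
    simpa using hy
  calc n * #({y | ∀ x ∈ S, y ∈ D x} : Finset α)ᶜ ≤ n * ∑ x ∈ S, #(D x)ᶜ :=
        Nat.mul_le_mul_left _ ((card_le_card hcover).trans card_biUnion_le)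
    _ = ∑ x ∈ S, n * (Fintype.card α - #(D x)) := by simp only [mul_sum, card_compl]
    _ ≤ #S * m := sum_le_card_nsmul _ _ _ hS

/-- The number of vertices above which `exists_card_eq_mul_card_compl_common_le` applies. -/
def dominationThreshold (c w C t j : ℕ) : ℕ :=
  let q := 4 * (t + 1) * j * c * c
  4 * (t + 1) * j * (2 ^ q * w * q + C) + 1

lemma exists_card_eq_mul_card_compl_common_le (hc : 0 < c) (hj : 2 ≤ j)
    (hsum : ∑ x, #(D x) ≤ c * Fintype.card α)
    (hsq : t * Fintype.card α ^ 2 ≤ ∑ x, #(D x) ^ 2 + C * Fintype.card α)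
    (hcommon : ∀ T : Finset α, #T = t + 1 → #{y | ∀ x ∈ T, y ∈ D x} ≤ w)
    (hn : dominationThreshold c w C t j ≤ Fintype.card α) :
    ∃ S : Finset α, #S = t ∧
      j * #({y | ∀ x ∈ S, y ∈ D x} : Finset α)ᶜ ≤ Fintype.card α := by
  set n := Fintype.card α
  set J := 4 * (t + 1) * j * c with hJ
  rw [dominationThreshold, ← hJ] at hn
  set A := 2 ^ (J * c) * w * (J * c)
  have hn0 : 0 < n := by omega
  set X : Finset α := {x | n ≤ J * #(D x)} with hX
  set L := ∑ x with ¬ n ≤ J * #(D x), #(D x) ^ 2 with hL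
  have hXcard : #X ≤ J * c := card_filter_le_mul_of_sum_le hn0 hsum
  have hLle : 4 * (t + 1) * j * L ≤ n ^ 2 := by
    refine Nat.le_of_mul_le_mul_left ?_ hc
    calc c * (4 * (t + 1) * j * L) = J * L := by rw [hJ]; ring
      _ ≤ c * n ^ 2 := mul_sum_sq_le_of_sum_le hsum
  have hXsum : ∑ x ∈ X, #(D x) ≤ t * n + A := by
    refine (sum_card_le_of_card_common_le fun T _ hT => hcommon T hT).trans ?_
    have hchoose := (Nat.choose_le_two_pow #X (t + 1)).trans (Nat.pow_le_pow_right two_pos hXcard)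
    exact Nat.add_le_add_left (Nat.mul_le_mul (Nat.mul_le_mul_right w hchoose) hXcard) _
  have hXsq : t * n ^ 2 ≤ ∑ x ∈ X, #(D x) ^ 2 + (C * n + L) := by
    rw [← sum_filter_add_sum_filter_not univ (fun x => n ≤ J * #(D x)), ← hX, ← hL] at hsq
    omega
  have hgap : (t + 1) * j * (2 * (A * n + (C * n + L))) ≤ n ^ 2 := by
    have := Nat.mul_le_mul_right n (Nat.le_of_succ_le hn)
    nlinarith
  have hgap' : 2 * (A * n + (C * n + L)) < n ^ 2 := by
    have : 2 ≤ (t + 1) * j := hj.trans (Nat.le_mul_of_pos_left j (by omega))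
    nlinarith [pow_pos hn0 2]
  obtain ⟨S, -, hS, hSd⟩ := exists_subset_card_eq_forall_mul_tsub_le
    (fun x _ => card_le_univ (D x)) hXsum hXsq hgap'
  refine ⟨S, hS, le_of_mul_le_mul_left ?_ hn0⟩
  calc n * (j * #({y | ∀ x ∈ S, y ∈ D x} : Finset α)ᶜ)
      = j * (n * #({y | ∀ x ∈ S, y ∈ D x} : Finset α)ᶜ) := mul_left_comm _ _ _
    _ ≤ j * (t * (2 * (A * n + (C * n + L)))) :=
        Nat.mul_le_mul_left _ (hS ▸ mul_card_compl_common_le hSd)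
    _ ≤ n * n := by nlinarith

end DominatingVertices

section Centers

variable {α : Type*} [DecidableEq α] [Fintype α] {k w ℓ t j C : ℕ} {F : Finset (Finset α)}

lemma mul_sq_le_sum_sq_card_kernelNeighbors_add (hk : 4 ≤ k) (hw : k * ℓ + 1 ≤ w)
    (hF : (F : Set (Finset α)).Sized k) (hfree : ∀ v, ¬ HasPathTo F ℓ v ∅)
    (hcard : t * Fintype.card α ^ (k - 1) ≤
      (k - 1).factorial * #F + C * Fintype.card α ^ (k - 2)) :
    t * Fintype.card α ^ 2 ≤ ∑ x, #(kernelNeighbors w F x) ^ 2 +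
      ((k - 1).factorial * (homogeneityConst k * w ^ 2) + C) * Fintype.card α := by
  rcases isEmpty_or_nonempty α with hα | hα
  · simp
  obtain ⟨r, rfl⟩ : ∃ r, k = r + 3 := ⟨k - 3, by omega⟩
  have hF' := card_le_add_sum_choose hk hw hF hfree Subset.rfl
    fun E _ x hE => hE.erase_subset_kernelNeighbors
  simp only [show r + 3 - 1 = r + 2 by omega, show r + 3 - 2 = r + 1 by omega] at hcard hF' ⊢
  set n := Fintype.card α
  set K := homogeneityConst (r + 3) * w ^ 2
  have hchoose : ∀ x, (r + 2).factorial * (#(kernelNeighbors w F x)).choose (r + 2) ≤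
      #(kernelNeighbors w F x) ^ 2 * n ^ r := fun x => by
    refine (factorial_mul_choose_le_pow _ _).trans ?_
    rw [pow_add, mul_comm]
    gcongr
    exact card_le_univ _
  refine Nat.le_of_mul_le_mul_right (c := n ^ r) ?_ (pow_pos Fintype.card_pos r)
  calc t * n ^ 2 * n ^ r = t * n ^ (r + 2) := by ring
    _ ≤ (r + 2).factorial * #F + C * n ^ (r + 1) := hcard
    _ ≤ (r + 2).factorial *
          (K * n ^ (r + 1) + ∑ x, (#(kernelNeighbors w F x)).choose (r + 2)) +
          C * n ^ (r + 1) := by gcongr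
    _ = ∑ x, (r + 2).factorial * (#(kernelNeighbors w F x)).choose (r + 2) +
          ((r + 2).factorial * K + C) * n * n ^ r := by rw [mul_add, mul_sum]; ring
    _ ≤ ∑ x, #(kernelNeighbors w F x) ^ 2 * n ^ r +
          ((r + 2).factorial * K + C) * n * n ^ r :=
        Nat.add_le_add_right (sum_le_sum fun x _ => hchoose x) _
    _ = _ := by rw [← sum_mul, ← add_mul]

lemma exists_card_eq_mul_card_compl_commonKernelNeighbors_le (hk : 4 ≤ k)
    (hw : k * (2 * t + 2) + t + 2 ≤ w) (hj : 2 ≤ j) (hF : (F : Set (Finset α)).Sized k)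
    (hfree : ∀ v, ¬ HasPathTo F (2 * t + 2) v ∅)
    (hcard : t * Fintype.card α ^ (k - 1) ≤
      (k - 1).factorial * #F + C * Fintype.card α ^ (k - 2))
    (hn : dominationThreshold (2 * w) w ((k - 1).factorial * (homogeneityConst k * w ^ 2) + C) t j
      ≤ Fintype.card α) :
    ∃ S : Finset α, #S = t ∧ j * #(commonKernelNeighbors w F S)ᶜ ≤ Fintype.card α := by
  refine exists_card_eq_mul_card_compl_common_le (by omega) hj
    (sum_card_kernelNeighbors_le (by omega) hF hfree)
    (mul_sq_le_sum_sq_card_kernelNeighbors_add hk (by omega) hF hfree hcard) (fun T hT => ?_) hn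
  exact card_commonKernelNeighbors_le hF (by rwa [hT]) (by rw [hT, mul_add_one 2 t]; omega)

end Centers

section RemoteEdges

variable {α : Type*} [DecidableEq α] {k w : ℕ} {F : Finset (Finset α)} {S E E' : Finset α}
  {x y : α}

lemma hasPathTo_two_of_isKernel (hk : 2 ≤ k) (hF : (F : Set (Finset α)).Sized k) (hx : x ∉ S)
    (hy : y ∉ S) (hyx : y ≠ x) (hKx : IsKernel w F {x}) (hKxy : IsKernel w F {x, y})
    (hw : k + 2 + #S ≤ w) : HasPathTo F 2 y S := by
  have hcard : #(insert y S) = #S + 1 := card_insert_of_notMem hy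
  obtain ⟨E, hE, hxE, hdisj⟩ := hKx (insert y S) (by omega)
  have hpath : HasPathTo F 1 x (insert y S) := by
    refine ⟨E, .single hE (singleton_subset_iff.1 hxE) ((hF hE).ge.trans' hk), ?_⟩
    rw [← insert_erase (singleton_subset_iff.1 hxE), ← sdiff_singleton_eq_erase,
      disjoint_insert_left]
    exact ⟨by simp [hyx.symm, hx], hdisj⟩
  have hstep := hpath.step hF (mem_insert_self y S) hKxy (by omega)
  rwa [erase_insert hy] at hstep

lemma hasPathTo_two_of_card_inter_eq_one (hE : E ∈ F) (hE' : E' ∈ F) (hcard : 2 ≤ #E')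
    (hES : Disjoint E S) (hE'S : Disjoint E' S) (hinter : #(E ∩ E') = 1) (hyE : y ∈ E)
    (hyE' : y ∉ E') : HasPathTo F 2 y S := by
  obtain ⟨v, hv⟩ := card_eq_one.1 hinter
  have hvE' : v ∈ E' := (mem_inter.1 (hv ▸ mem_singleton_self v : v ∈ E ∩ E')).2
  exact ⟨E' ∪ E, (LinearPathTo.single hE' hvE' hcard).snoc hE hv hyE fun h => hyE' (h ▸ hvE'),
    disjoint_union_left.2 ⟨hE'S, hES⟩⟩

variable [Fintype α]

lemma not_hasPathTo_two_of_mem_commonKernelNeighbors (hF : (F : Set (Finset α)).Sized k)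
    (hfree : ∀ v, ¬ HasPathTo F (2 * #S + 2) v ∅) (hw : k * (2 * #S + 2) + 1 + #S ≤ w)
    (hN : w < #(commonKernelNeighbors w F S)) (hy : y ∈ commonKernelNeighbors w F S) :
    ¬ HasPathTo F 2 y S := by
  intro hpath
  rw [add_comm (2 * #S)] at hfree hw
  obtain ⟨z, hz⟩ := hpath.exists_weave hF disjoint_commonKernelNeighbors
    (fun x hx y hy => isKernel_pair_of_mem_commonKernelNeighbors hx hy) hy hw hN
  exact hfree z hz

/-- The vertices outside `S` that fail to form a kernel of size two with some vertex of `S`. -/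
noncomputable def exceptionalVertices (w : ℕ) (F : Finset (Finset α)) (S : Finset α) : Finset α :=
  (S ∪ commonKernelNeighbors w F S)ᶜ

lemma mem_exceptionalVertices :
    y ∈ exceptionalVertices w F S ↔ y ∉ S ∧ y ∉ commonKernelNeighbors w F S := by
  rw [exceptionalVertices, mem_compl, mem_union, not_or]

lemma exists_not_isKernel_of_mem_exceptionalVertices (hy : y ∈ exceptionalVertices w F S) :
    ∃ x ∈ S, x ≠ y ∧ ¬ IsKernel w F {x, y} := by
  obtain ⟨hyS, hyN⟩ := mem_exceptionalVertices.1 hy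
  simp only [mem_commonKernelNeighbors, mem_kernelNeighbors] at hyN
  push Not at hyN
  obtain ⟨x, hxS, hx⟩ := hyN
  have hyx : y ≠ x := fun h => hyS (h ▸ hxS)
  exact ⟨x, hxS, hyx.symm, hx hyx⟩

/-- The members of `F` avoiding `S` with at least two vertices among the common neighbors
of `S`. -/
noncomputable def typicalEdges (w : ℕ) (F : Finset (Finset α)) (S : Finset α) :
    Finset (Finset α) :=
  {E ∈ F | Disjoint E S ∧ 2 ≤ #(E ∩ commonKernelNeighbors w F S)}

/-- The members of `F` avoiding `S` with at most one vertex among the common neighbors of `S`. -/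
noncomputable def exceptionalEdges (w : ℕ) (F : Finset (Finset α)) (S : Finset α) :
    Finset (Finset α) :=
  {E ∈ F | Disjoint E S ∧ #(E ∩ commonKernelNeighbors w F S) < 2}

/-- The `k`-sets meeting `S` that are missing from `F`. -/
def missingSets (k : ℕ) (F : Finset (Finset α)) (S : Finset α) : Finset (Finset α) :=
  {E ∈ powersetCard k (univ : Finset α) | ¬ Disjoint E S} \ F

lemma mem_typicalEdges : E ∈ typicalEdges w F S ↔
    E ∈ F ∧ Disjoint E S ∧ 2 ≤ #(E ∩ commonKernelNeighbors w F S) := by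
  rw [typicalEdges, mem_filter]

lemma mem_exceptionalEdges : E ∈ exceptionalEdges w F S ↔
    E ∈ F ∧ Disjoint E S ∧ #(E ∩ commonKernelNeighbors w F S) < 2 := by
  rw [exceptionalEdges, mem_filter]

lemma mem_missingSets : E ∈ missingSets k F S ↔ (#E = k ∧ ¬ Disjoint E S) ∧ E ∉ F := by
  simp [missingSets]

lemma card_typicalEdges_add_card_exceptionalEdges :
    #(typicalEdges w F S) + #(exceptionalEdges w F S) = #{E ∈ F | Disjoint E S} := by
  rw [← card_filter_add_card_filter_not (s := {E ∈ F | Disjoint E S})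
    (fun E : Finset α => 2 ≤ #(E ∩ commonKernelNeighbors w F S)), filter_filter, filter_filter]
  simp only [typicalEdges, exceptionalEdges, not_le]

lemma singleIntersectionFree_typicalEdges (hk : 2 ≤ k) (hF : (F : Set (Finset α)).Sized k)
    (hfree : ∀ v, ¬ HasPathTo F (2 * #S + 2) v ∅) (hw : k * (2 * #S + 2) + 1 + #S ≤ w)
    (hN : w < #(commonKernelNeighbors w F S)) : SingleIntersectionFree (typicalEdges w F S) := by
  intro E hE E' hE' hinter
  obtain ⟨hEF, hES, htwo⟩ := mem_typicalEdges.1 hE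
  obtain ⟨hE'F, hE'S, -⟩ := mem_typicalEdges.1 hE'
  obtain ⟨y, hy, hyE'⟩ := exists_mem_notMem_of_card_lt_card (hinter.trans_lt htwo)
  obtain ⟨hyE, hyN⟩ := mem_inter.1 hy
  exact not_hasPathTo_two_of_mem_commonKernelNeighbors hF hfree hw hN hyN
    (hasPathTo_two_of_card_inter_eq_one hEF hE'F ((hF hE'F).ge.trans' hk) hES hE'S hinter hyE
      fun h => hyE' (mem_inter.2 ⟨hyE, h⟩))

lemma IsCore.erase_subset_exceptionalVertices (hk : 2 ≤ k) (hF : (F : Set (Finset α)).Sized k)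
    (hfree : ∀ v, ¬ HasPathTo F (2 * #S + 2) v ∅) (hw : k * (2 * #S + 2) + 1 + #S ≤ w)
    (hN : w < #(commonKernelNeighbors w F S)) (hES : Disjoint E S) (hE : IsCore w F E {x}) :
    E.erase x ⊆ exceptionalVertices w F S := by
  intro y hy
  obtain ⟨hyx, hyE⟩ := mem_erase.1 hy
  have hxE := singleton_subset_iff.1 hE.1
  have hyS := disjoint_left.1 hES hyE
  refine mem_exceptionalVertices.2 ⟨hyS, fun hyN => ?_⟩
  refine not_hasPathTo_two_of_mem_commonKernelNeighbors hF hfree hw hN hyN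
    (hasPathTo_two_of_isKernel hk hF (disjoint_left.1 hES hxE) hyS hyx
      (hE.2 {x} Subset.rfl hE.1) (mem_kernelNeighbors.1 (hE.erase_subset_kernelNeighbors hy)).2 ?_)
  nlinarith

lemma card_exceptionalEdges_le_add (hk : 4 ≤ k) (hF : (F : Set (Finset α)).Sized k)
    (hfree : ∀ v, ¬ HasPathTo F (2 * #S + 2) v ∅) (hw : k * (2 * #S + 2) + 2 + #S ≤ w)
    (hN : w < #(commonKernelNeighbors w F S)) :
    #(exceptionalEdges w F S) ≤ homogeneityConst k * w ^ 2 * Fintype.card α ^ (k - 2) +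
      #(exceptionalVertices w F S) ^ (k - 2) * (2 * w * Fintype.card α) := by
  refine (card_le_add_sum_choose hk (by omega) hF hfree (filter_subset _ _) (D := fun x =>
    exceptionalVertices w F S ∩ kernelNeighbors w F x) fun E hE x hcore => subset_inter
      (hcore.erase_subset_exceptionalVertices (by omega) hF hfree (by omega) hN
        (mem_exceptionalEdges.1 hE).2.1) hcore.erase_subset_kernelNeighbors).trans ?_
  refine Nat.add_le_add_left ?_ _
  calc ∑ x, (#(exceptionalVertices w F S ∩ kernelNeighbors w F x)).choose (k - 1)
      ≤ ∑ x, #(exceptionalVertices w F S) ^ (k - 2) * #(kernelNeighbors w F x) := by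
        refine sum_le_sum fun x _ => (Nat.choose_le_pow _ _).trans ?_
        rw [show k - 1 = k - 2 + 1 by omega, pow_succ]
        gcongr
        · exact inter_subset_left
        · exact inter_subset_right
    _ = #(exceptionalVertices w F S) ^ (k - 2) * ∑ x, #(kernelNeighbors w F x) :=
        (mul_sum _ _ _).symm
    _ ≤ _ := Nat.mul_le_mul_left _ (sum_card_kernelNeighbors_le (by omega) hF hfree)

lemma card_exceptionalEdges_le_mul (hk : 1 ≤ k) (hF : (F : Set (Finset α)).Sized k) :
    #(exceptionalEdges w F S) ≤ Fintype.card α * #(exceptionalVertices w F S) ^ (k - 1) := by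
  have hcover : ∀ E ∈ exceptionalEdges w F S,
      ∃ x ∈ E, E.erase x ⊆ exceptionalVertices w F S := by
    intro E hE
    obtain ⟨hEF, hES, hlt⟩ := mem_exceptionalEdges.1 hE
    have hmem : ∀ y ∈ E, y ∉ E ∩ commonKernelNeighbors w F S → y ∈ exceptionalVertices w F S :=
      fun y hyE hy => mem_exceptionalVertices.2
        ⟨disjoint_left.1 hES hyE, fun hyN => hy (mem_inter.2 ⟨hyE, hyN⟩)⟩
    rcases (E ∩ commonKernelNeighbors w F S).eq_empty_or_nonempty with hempty | ⟨x, hx⟩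
    · obtain ⟨x, hx⟩ := card_pos.1 (hk.trans_eq (hF hEF).symm)
      exact ⟨x, hx, fun y hy => hmem y (mem_of_mem_erase hy) (by simp [hempty])⟩
    · exact ⟨x, (mem_inter.1 hx).1, fun y hy => hmem y (mem_of_mem_erase hy) fun hyN =>
        ne_of_mem_erase hy (card_le_one.1 (Nat.lt_succ_iff.1 hlt) y hyN x hx)⟩
  refine (card_le_sum_choose (fun E hE => hF (mem_exceptionalEdges.1 hE).1) hcover).trans ?_
  rw [sum_const, card_univ, smul_eq_mul]
  exact Nat.mul_le_mul_left _ (Nat.choose_le_pow _ _)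

lemma card_filter_subset_le_of_not_isKernel {U : Finset α} (hU : #U < k)
    (hF : (F : Set (Finset α)).Sized k) (hK : ¬ IsKernel w F U) :
    #{E ∈ F | U ⊆ E} ≤ w * Fintype.card α ^ (k - (#U + 1)) := by
  rw [IsKernel] at hK
  push Not at hK
  obtain ⟨W, hW, hmeet⟩ := hK
  have hcover : {E ∈ F | U ⊆ E} ⊆
      (W \ U).biUnion fun z => {E ∈ powersetCard k univ | insert z U ⊆ E} := by
    intro E hE
    obtain ⟨hEF, hUE⟩ := mem_filter.1 hE
    obtain ⟨z, hz, hzW⟩ := not_disjoint_iff.1 (hmeet E hEF hUE)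
    obtain ⟨hzE, hzU⟩ := mem_sdiff.1 hz
    exact mem_biUnion.2 ⟨z, mem_sdiff.2 ⟨hzW, hzU⟩, mem_filter.2
      ⟨mem_powersetCard.2 ⟨subset_univ E, hF hEF⟩, insert_subset hzE hUE⟩⟩
  refine (card_le_card hcover).trans ((card_biUnion_le_card_mul _ _ _ fun z hz => ?_).trans
    (Nat.mul_le_mul_right _ ((card_le_card sdiff_subset).trans hW)))
  have hcard : #(insert z U) = #U + 1 := card_insert_of_notMem (mem_sdiff.1 hz).2
  rw [card_filter_powersetCard_subset _ _ _ (subset_univ _) (by omega), hcard, card_univ]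
  exact (Nat.choose_le_pow _ _).trans (Nat.pow_le_pow_left (Nat.sub_le _ _) _)

lemma card_exceptionalVertices_mul_le (hk : 3 ≤ k) (hF : (F : Set (Finset α)).Sized k) :
    #(exceptionalVertices w F S) *
      ((Fintype.card α - 2).choose (k - 2) - w * Fintype.card α ^ (k - 3)) ≤
      #(missingSets k F S) * k := by
  refine (le_sum_card_inter (B := missingSets k F S) fun y hy => ?_).trans
    (sum_le_card_nsmul _ _ _ fun E hE => ?_)
  · obtain ⟨x, hxS, hxy, hK⟩ := exists_not_isKernel_of_mem_exceptionalVertices hy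
    have hthrough := card_filter_powersetCard_subset {x, y} univ k (subset_univ _)
      ((card_pair hxy).trans_le (by omega))
    have hpresent := card_filter_subset_le_of_not_isKernel (by rw [card_pair hxy]; omega) hF hK
    rw [card_pair hxy, card_univ] at hthrough
    simp only [card_pair hxy, Nat.reduceAdd] at hpresent
    have hcover : ({E ∈ powersetCard k univ | {x, y} ⊆ E} : Finset (Finset α)) ⊆
        {E ∈ missingSets k F S | y ∈ E} ∪ {E ∈ F | {x, y} ⊆ E} := by
      intro E hE
      simp only [mem_filter, mem_powersetCard, mem_union, mem_missingSets, insert_subset_iff,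
        singleton_subset_iff] at hE ⊢
      by_cases hEF : E ∈ F
      · exact Or.inr ⟨hEF, hE.2⟩
      · exact Or.inl ⟨⟨⟨hE.1.2, not_disjoint_iff.2 ⟨x, hE.2.1, hxS⟩⟩, hEF⟩, hE.2.2⟩
    have := (card_le_card hcover).trans (card_union_le _ _)
    omega
  · exact (card_le_card inter_subset_right).trans (mem_missingSets.1 hE).1.1.le

end RemoteEdges

section Counting

lemma choose_add_sum_choose {n k s : ℕ} (hk : 1 ≤ k) (hs : s ≤ n) :
    (n - s).choose k + ∑ i ∈ Icc 1 s, (n - i).choose (k - 1) = n.choose k := by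
  obtain ⟨k, rfl⟩ := Nat.exists_eq_add_of_le' hk
  induction s with
  | zero => simp
  | succ s ih =>
    have hpascal := Nat.choose_succ_succ' (n - (s + 1)) k
    rw [show n - (s + 1) + 1 = n - s by omega] at hpascal
    rw [sum_Icc_succ_top (Nat.le_add_left 1 s), ← ih (by omega), Nat.add_sub_cancel, hpascal]
    ring

lemma mul_pow_le_factorial_mul_sum_choose_add (n k t : ℕ) :
    t * n ^ k ≤ k.factorial * ∑ i ∈ Icc 1 t, (n - i).choose k +
      t * (k * (t + k)) * n ^ (k - 1) := by
  calc t * n ^ k = ∑ _i ∈ Icc 1 t, n ^ k := by simp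
    _ ≤ ∑ i ∈ Icc 1 t, (k.factorial * (n - i).choose k + k * (t + k) * n ^ (k - 1)) :=
        sum_le_sum fun i hi => (pow_le_factorial_mul_choose_add n i k).trans <| by
          gcongr
          exact (mem_Icc.1 hi).2
    _ = _ := by simp [sum_add_distrib, mul_sum, mul_assoc]

lemma card_filter_not_disjoint_powersetCard {α : Type*} [DecidableEq α] [Fintype α] {k : ℕ}
    (hk : 1 ≤ k) (S : Finset α) :
    #{E ∈ powersetCard k (univ : Finset α) | ¬ Disjoint E S} =
      ∑ i ∈ Icc 1 #S, (Fintype.card α - i).choose (k - 1) := by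
  have havoid : {E ∈ powersetCard k (univ : Finset α) | Disjoint E S} = powersetCard k Sᶜ := by
    ext E
    simp only [mem_filter, mem_powersetCard, subset_univ, true_and]
    rw [subset_compl_iff_disjoint_right, and_comm]
  have hsplit := card_filter_add_card_filter_not (s := powersetCard k (univ : Finset α))
    (Disjoint · S)
  rw [havoid, card_powersetCard, card_powersetCard, card_compl, card_univ,
    ← choose_add_sum_choose hk (card_le_univ S)] at hsplit
  exact Nat.add_left_cancel hsplit

lemma le_of_mul_pow_le_of_le_add {k n y M b w C : ℕ} (hk : 4 ≤ k) (hn : 0 < n)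
    (hy : (4 * b * w + 2) * y ≤ n) (hM : y * n ^ (k - 2) ≤ b * M)
    (hMle : M ≤ C * n ^ (k - 2) + y ^ (k - 2) * (2 * w * n)) : y ≤ 2 * b * C := by
  obtain ⟨r, rfl⟩ := Nat.exists_eq_add_of_le' hk
  simp only [Nat.reduceSubDiff] at *
  have hyn : y ≤ n := (Nat.le_mul_of_pos_left y (by positivity)).trans hy
  have hsmall : 4 * b * w * y ^ (r + 2) * n ≤ y * n ^ (r + 2) :=
    calc 4 * b * w * y ^ (r + 2) * n = y * n * (4 * b * w * y * y ^ r) := by ring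
      _ ≤ y * n * (n * n ^ r) := by
        gcongr
        exact (Nat.mul_le_mul_right y (Nat.le_add_right _ 2)).trans hy
      _ = y * n ^ (r + 2) := by ring
  have hdouble : 2 * (y * n ^ (r + 2)) ≤ 2 * b * C * n ^ (r + 2) + y * n ^ (r + 2) :=
    calc 2 * (y * n ^ (r + 2)) ≤ 2 * (b * (C * n ^ (r + 2) + y ^ (r + 2) * (2 * w * n))) :=
          Nat.mul_le_mul_left 2 (hM.trans (Nat.mul_le_mul_left b hMle))
      _ = 2 * b * C * n ^ (r + 2) + 4 * b * w * y ^ (r + 2) * n := by ring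
      _ ≤ _ := by gcongr
  refine Nat.le_of_mul_le_mul_right (c := n ^ (r + 2)) ?_ (by positivity)
  omega

lemma eq_zero_of_mul_pow_le {k n y M b D : ℕ} (hk : 4 ≤ k) (hM : y * n ^ (k - 2) ≤ b * M)
    (hMle : M ≤ n * y ^ (k - 1)) (hy : y ≤ D) (hn : b * D ^ (k - 2) < n) : y = 0 := by
  obtain ⟨r, rfl⟩ := Nat.exists_eq_add_of_le' hk
  simp only [Nat.reduceSubDiff] at *
  by_contra hy0
  have hmul : y * n * n ^ (r + 1) ≤ y * n * (b * D ^ (r + 2)) :=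
    calc y * n * n ^ (r + 1) = y * n ^ (r + 2) := by ring
      _ ≤ b * (n * y ^ (r + 3)) := hM.trans (Nat.mul_le_mul_left b hMle)
      _ = y * n * (b * y ^ (r + 2)) := by ring
      _ ≤ y * n * (b * D ^ (r + 2)) := by gcongr
  have hle := Nat.le_of_mul_le_mul_left hmul (Nat.mul_pos (Nat.pos_of_ne_zero hy0) (by omega))
  exact absurd (hle.trans_lt hn) (Nat.le_self_pow (by omega) n).not_gt

end Counting

section Extremal

variable {α : Type*} [DecidableEq α] [Fintype α] {k t w : ℕ} {F : Finset (Finset α)} {S : Finset α}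

lemma card_add_card_missingSets (hk : 1 ≤ k) (hF : (F : Set (Finset α)).Sized k) :
    #F + #(missingSets k F S) =
      ∑ i ∈ Icc 1 #S, (Fintype.card α - i).choose (k - 1) + #{E ∈ F | Disjoint E S} := by
  have hmeet : {E ∈ powersetCard k (univ : Finset α) | ¬ Disjoint E S} ∩ F =
      {E ∈ F | ¬ Disjoint E S} := by
    ext E
    simp only [mem_inter, mem_filter, mem_powersetCard, subset_univ, true_and]
    exact ⟨fun h => ⟨h.2, h.1.2⟩, fun h => ⟨⟨hF h.1, h.2⟩, h.1⟩⟩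
  have hpresent := card_sdiff_add_card_inter
    {E ∈ powersetCard k (univ : Finset α) | ¬ Disjoint E S} F
  have hsplit := card_filter_add_card_filter_not (s := F) (Disjoint · S)
  rw [hmeet, card_filter_not_disjoint_powersetCard hk] at hpresent
  rw [missingSets]
  omega

lemma card_missingSets_le_card_exceptionalEdges (hk : 4 ≤ k) (hF : (F : Set (Finset α)).Sized k)
    (hfree : SingleIntersectionFree (typicalEdges w F S))
    (hn : franklThreshold k + #S ≤ Fintype.card α)
    (hcard : ∑ i ∈ Icc 1 #S, (Fintype.card α - i).choose (k - 1) +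
      (Fintype.card α - #S - 2).choose (k - 2) ≤ #F) :
    #(missingSets k F S) ≤ #(exceptionalEdges w F S) := by
  have htypical : #(typicalEdges w F S) ≤ (Fintype.card α - #S - 2).choose (k - 2) := by
    rw [← card_compl]
    exact hfree.card_le hk (fun E hE => hF (mem_typicalEdges.1 hE).1)
      (fun E hE => subset_compl_iff_disjoint_right.2 (mem_typicalEdges.1 hE).2.1)
      (by rw [card_compl]; omega)
  have hsplit := card_typicalEdges_add_card_exceptionalEdges (w := w) (F := F) (S := S)
  have htotal := card_add_card_missingSets (S := S) (by omega) hF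
  omega

lemma card_exceptionalVertices_mul_pow_le (hk : 3 ≤ k) (hF : (F : Set (Finset α)).Sized k)
    (hn : 2 * ((k - 2).factorial * w + (k - 2) * k) ≤ Fintype.card α) :
    #(exceptionalVertices w F S) * Fintype.card α ^ (k - 2) ≤
      2 * k * (k - 2).factorial * #(missingSets k F S) := by
  have hmissing := card_exceptionalVertices_mul_le (w := w) (S := S) hk hF
  have hchoose := pow_le_factorial_mul_choose_add (Fintype.card α) 2 (k - 2)
  rw [show 2 + (k - 2) = k by omega, show k - 2 - 1 = k - 3 by omega] at hchoose
  set n := Fintype.card α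
  set y := #(exceptionalVertices w F S)
  have hpow : n ^ (k - 2) = n * n ^ (k - 3) := by rw [← pow_succ']; congr 1; omega
  have hhalf : 2 * (((k - 2).factorial * w + (k - 2) * k) * n ^ (k - 3)) ≤ n ^ (k - 2) := by
    rw [hpow, ← mul_assoc]
    exact Nat.mul_le_mul_right _ hn
  have hlarge : n ^ (k - 2) ≤
      2 * ((k - 2).factorial * ((n - 2).choose (k - 2) - w * n ^ (k - 3))) := by
    rw [Nat.mul_sub]
    have hexpand : ((k - 2).factorial * w + (k - 2) * k) * n ^ (k - 3) =
      (k - 2).factorial * (w * n ^ (k - 3)) + (k - 2) * k * n ^ (k - 3) := by ring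
    omega
  calc y * n ^ (k - 2)
      ≤ y * (2 * ((k - 2).factorial * ((n - 2).choose (k - 2) - w * n ^ (k - 3)))) := by gcongr
    _ = 2 * (k - 2).factorial * (y * ((n - 2).choose (k - 2) - w * n ^ (k - 3))) := by ring
    _ ≤ 2 * (k - 2).factorial * (#(missingSets k F S) * k) := by gcongr
    _ = _ := by ring

lemma exists_eq_filter_of_missingSets_eq_empty (hk : 4 ≤ k) (hF : (F : Set (Finset α)).Sized k)
    (hfree : SingleIntersectionFree (typicalEdges w F S))
    (hn : franklThreshold k + #S ≤ Fintype.card α)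
    (hcard : (Fintype.card α - #S - 2).choose (k - 2) ≤ #(typicalEdges w F S))
    (hmissing : missingSets k F S = ∅) (hexc : exceptionalEdges w F S = ∅) :
    ∃ u v, u ∉ S ∧ v ∉ S ∧ u ≠ v ∧ F = {A ∈ powersetCard k (univ : Finset α) |
      (A ∩ S).Nonempty ∨ (A ∩ S = ∅ ∧ u ∈ A ∧ v ∈ A)} := by
  rw [← card_compl] at hcard
  obtain ⟨e, heS, he, htypical⟩ := hfree.exists_eq_filter_subset hk
    (fun E hE => hF (mem_typicalEdges.1 hE).1)
    (fun E hE => subset_compl_iff_disjoint_right.2 (mem_typicalEdges.1 hE).2.1)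
    (by rw [card_compl]; omega) hcard
  obtain ⟨u, v, huv, rfl⟩ := card_eq_two.1 he
  simp only [insert_subset_iff, singleton_subset_iff, mem_compl] at heS
  refine ⟨u, v, heS.1, heS.2, huv, ?_⟩
  have hmeet : ∀ A, #A = k → ¬ Disjoint A S → A ∈ F := fun A hA hAS => by
    by_contra hAF
    exact notMem_empty A (hmissing ▸ mem_missingSets.2 ⟨⟨hA, hAS⟩, hAF⟩)
  have havoid : ∀ A, Disjoint A S → (A ∈ F ↔ #A = k ∧ u ∈ A ∧ v ∈ A) := fun A hAS => by
    have hA : A ∈ F ↔ A ∈ typicalEdges w F S := by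
      refine ⟨fun hAF => mem_typicalEdges.2 ⟨hAF, hAS, ?_⟩, fun h => (mem_typicalEdges.1 h).1⟩
      by_contra! hlt
      exact notMem_empty A (hexc ▸ mem_exceptionalEdges.2 ⟨hAF, hAS, hlt⟩)
    rw [hA, htypical]
    simp [insert_subset_iff, subset_compl_iff_disjoint_right, hAS]
  ext A
  simp only [mem_filter, mem_powersetCard, subset_univ, true_and,
    ← not_disjoint_iff_nonempty_inter, ← disjoint_iff_inter_eq_empty]
  by_cases hAS : Disjoint A S
  · simp [hAS, havoid A hAS]
  · simp only [hAS, not_false_eq_true, false_and, or_false, and_true]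
    exact ⟨fun hA => hF hA, fun hA => hmeet A hA hAS⟩

/-- The kernel width for which the paths of length `2 * t + 2` used in the proof can be built
greedily. -/
def kernelWidth (k t : ℕ) : ℕ :=
  k * (2 * t + 2) + t + 2

/-- A bound on the number of exceptional vertices that does not depend on the number of
vertices. -/
noncomputable def exceptionalVertexBound (k t : ℕ) : ℕ :=
  2 * (2 * k * (k - 2).factorial) * (homogeneityConst k * kernelWidth k t ^ 2)

/-- The proportion `1 / centerQuality k t` of the vertices is allowed outside the common kernel
neighborhood of the center. -/
def centerQuality (k t : ℕ) : ℕ :=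
  4 * (2 * k * (k - 2).factorial) * kernelWidth k t + 2

/-- The number of vertices above which the extremal families are determined. -/
noncomputable def extremalThreshold (k t : ℕ) : ℕ :=
  dominationThreshold (2 * kernelWidth k t) (kernelWidth k t)
      ((k - 1).factorial * (homogeneityConst k * kernelWidth k t ^ 2) +
        t * ((k - 1) * (t + (k - 1)))) t (centerQuality k t) +
    (franklThreshold k + t) + 2 * ((k - 2).factorial * kernelWidth k t + (k - 2) * k) +
    2 * k * (k - 2).factorial * exceptionalVertexBound k t ^ (k - 2) + 2 * kernelWidth k t + 1

lemma exceptionalVertices_eq_empty (hk : 4 ≤ k) (hF : (F : Set (Finset α)).Sized k)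
    (hfree : ∀ v, ¬ HasPathTo F (2 * #S + 2) v ∅)
    (hN : kernelWidth k #S < #(commonKernelNeighbors (kernelWidth k #S) F S))
    (hquality : centerQuality k #S *
      #(exceptionalVertices (kernelWidth k #S) F S) ≤ Fintype.card α)
    (hmissing : #(missingSets k F S) ≤ #(exceptionalEdges (kernelWidth k #S) F S))
    (hn : extremalThreshold k #S ≤ Fintype.card α) :
    exceptionalVertices (kernelWidth k #S) F S = ∅ := by
  rw [extremalThreshold] at hn
  have hpow := card_exceptionalVertices_mul_pow_le (w := kernelWidth k #S) (S := S)
    (by omega) hF (by omega)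
  have hbound : #(exceptionalVertices (kernelWidth k #S) F S) ≤ exceptionalVertexBound k #S :=
    le_of_mul_pow_le_of_le_add hk (by omega) hquality hpow (hmissing.trans
      (card_exceptionalEdges_le_add hk hF hfree (by rw [kernelWidth]; omega) hN))
  exact card_eq_zero.1 (eq_zero_of_mul_pow_le hk hpow
    (hmissing.trans (card_exceptionalEdges_le_mul (by omega) hF)) hbound (by omega))

theorem exists_eq_filter_of_forall_not_hasPathTo (hk : 4 ≤ k) (hF : (F : Set (Finset α)).Sized k)
    (hfree : ∀ v, ¬ HasPathTo F (2 * t + 2) v ∅) (hn : extremalThreshold k t ≤ Fintype.card α)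
    (hcard : ∑ i ∈ Icc 1 t, (Fintype.card α - i).choose (k - 1) +
      (Fintype.card α - t - 2).choose (k - 2) ≤ #F) :
    ∃ (S : Finset α) (u v : α), #S = t ∧ u ∉ S ∧ v ∉ S ∧ u ≠ v ∧
      F = {A ∈ powersetCard k (univ : Finset α) |
        (A ∩ S).Nonempty ∨ (A ∩ S = ∅ ∧ u ∈ A ∧ v ∈ A)} := by
  have hn' := hn
  rw [extremalThreshold] at hn'
  have hdense : t * Fintype.card α ^ (k - 1) ≤ (k - 1).factorial * #F +
      t * ((k - 1) * (t + (k - 1))) * Fintype.card α ^ (k - 2) := by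
    refine (mul_pow_le_factorial_mul_sum_choose_add _ _ _).trans ?_
    rw [Nat.sub_sub]
    gcongr
    omega
  obtain ⟨S, rfl, hS⟩ := exists_card_eq_mul_card_compl_commonKernelNeighbors_le hk
    (w := kernelWidth k t) (j := centerQuality k t) le_rfl (Nat.le_add_left _ _) hF hfree hdense
    (by omega)
  set w := kernelWidth k #S with hw
  have hN : w < #(commonKernelNeighbors w F S) := by
    have := card_add_card_compl (commonKernelNeighbors w F S)
    have : 2 * #(commonKernelNeighbors w F S)ᶜ ≤ Fintype.card α :=
      (Nat.mul_le_mul_right _ (Nat.le_add_left _ _)).trans hS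
    omega
  have hquality : centerQuality k #S * #(exceptionalVertices w F S) ≤ Fintype.card α :=
    (Nat.mul_le_mul_left _ <| card_le_card <| compl_subset_compl.2 subset_union_right).trans hS
  have htypical : SingleIntersectionFree (typicalEdges w F S) :=
    singleIntersectionFree_typicalEdges (by omega) hF hfree (by rw [hw, kernelWidth]; omega) hN
  have hmissing := card_missingSets_le_card_exceptionalEdges hk hF htypical (by omega) hcard
  have hempty := exceptionalVertices_eq_empty hk hF hfree hN hquality hmissing hn
  have hexc := card_exceptionalEdges_le_mul (w := w) (S := S) (by omega : 1 ≤ k) hF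
  rw [hempty, card_empty, zero_pow (by omega), mul_zero] at hexc
  have hsplit := card_typicalEdges_add_card_exceptionalEdges (w := w) (F := F) (S := S)
  have htotal := card_add_card_missingSets (S := S) (by omega) hF
  obtain ⟨u, v, huv⟩ := exists_eq_filter_of_missingSets_eq_empty hk hF htypical (by omega)
    (by omega) (card_eq_zero.1 (by omega)) (card_eq_zero.1 (by omega))
  exact ⟨S, u, v, rfl, huv⟩

end Extremal

theorem turan_linear_path_even_extremal_general (k t : ℕ) (hk : 4 ≤ k) :
    ∃ n₀ : ℕ, ∀ n : ℕ, n₀ ≤ n → ∀ F : Finset (Finset (Fin n)),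
      (∀ A ∈ F, A.card = k) → ¬ ContainsLinearPath k (2 * t + 2) F →
      (∑ i ∈ Finset.Icc 1 t, (n - i).choose (k - 1)) + (n - t - 2).choose (k - 2) ≤ F.card →
      ∃ (S : Finset (Fin n)) (u v : Fin n), S.card = t ∧ u ∉ S ∧ v ∉ S ∧ u ≠ v ∧
        F = (Finset.powersetCard k Finset.univ).filter
          (fun A => (A ∩ S).Nonempty ∨ (A ∩ S = ∅ ∧ u ∈ A ∧ v ∈ A)) := by
  refine ⟨extremalThreshold k t, fun n hn F hF hpath hcard => ?_⟩
  refine exists_eq_filter_of_forall_not_hasPathTo hk hF (fun v ⟨B, hB, _⟩ => ?_) (by simpa)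
    (by simpa)
  exact hpath (containsLinearPath_of_linearPathTo (by omega) hF hB)

/-- Uniqueness of the extremal family for `P^{(k)}_{2t+2}`: an extremal family consists of
all k-subsets of [n] meeting a fixed t-set S, plus all k-subsets of [n]∖S containing
two fixed elements u, v ∉ S. -/
theorem turan_linear_path_even_extremal (k t : ℕ) (hk : 4 ≤ k) (ht : 1 ≤ t) :
    ∃ n₀ : ℕ, ∀ n : ℕ, n₀ ≤ n → ∀ F : Finset (Finset (Fin n)),
      (∀ A ∈ F, A.card = k) → ¬ ContainsLinearPath k (2 * t + 2) F →
      F.card = (∑ i ∈ Finset.Icc 1 t, (n - i).choose (k - 1)) + (n - t - 2).choose (k - 2) →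
      ∃ (S : Finset (Fin n)) (u v : Fin n), S.card = t ∧ u ∉ S ∧ v ∉ S ∧ u ≠ v ∧
        F = (Finset.powersetCard k Finset.univ).filter
          (fun A => (A ∩ S).Nonempty ∨ (A ∩ S = ∅ ∧ u ∈ A ∧ v ∈ A)) := by
  obtain ⟨n₀, h⟩ := turan_linear_path_even_extremal_general k t hk
  exact ⟨n₀, fun n hn F hF hpath hcard => h n hn F hF hpath hcard.ge⟩
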